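/- arXiv:math/0407064 — 4 statements merged into one kernel-verified Lean document; each statement's English description precedes it below -/
import Mathlib

section
/- Let f ∈ ℂ[x₁,…,x_{n+1}] be a strongly tame polynomial. Then the set Sing(f) of common zeros in ℂ^{n+1} of the partial derivatives ∂f/∂x₁,…,∂f/∂x_{n+1} is finite (i.e., f has only isolated singularities). -/
open MvPolynomial

/-!
The Jacobian ideal of a strongly tame `f` has finite colength. Indeed, by the Nullstellensatz, the
ideal generated by the partial derivatives of the leading form `g` contains all but finitely many
monomials. Expressing such a monomial through the partials of `g` and then replacing each `∂g/∂xᵢ`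
by `∂f/∂xᵢ` changes it only by terms of smaller weight, so by induction on the weight the finitely
many remaining monomials span `ℂ[x]` modulo the Jacobian ideal of `f`. The zeros of an ideal are
algebra homomorphisms from its quotient to `ℂ`, and a finite-dimensional algebra has only finitely
many of these.
-/

variable {σ ι R M k K : Type*}

theorem restrictSupport_le_iff [CommSemiring R] {s : Set (σ →₀ ℕ)}
    {U : Submodule R (MvPolynomial σ R)} :
    restrictSupport R s ≤ U ↔ ∀ β ∈ s, monomial β 1 ∈ U := by
  rw [restrictSupport_eq_span, Submodule.span_le, Set.image_subset_iff]
  rfl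

theorem restrictSupport_fg [CommSemiring R] {s : Set (σ →₀ ℕ)} (hs : s.Finite) :
    (restrictSupport R s).FG := by
  rw [restrictSupport_eq_span]
  exact Submodule.fg_span (hs.image _)

section LeadingForm

variable [CommRing R] [AddCommMonoid M]

/-- `u` is the leading form of `v` in weight `e`: it is quasi-homogeneous of degree `e`, and all
other terms of `v` have weight less than `e`. The form `u` may vanish, so `e` is only an upper bound
for the weighted degree of `v`. -/
structure IsLeadingForm [Preorder M] (w : σ → M) (e : M) (v u : MvPolynomial σ R) : Prop where
  isWeightedHomogeneous : IsWeightedHomogeneous w u e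
  weight_lt : ∀ ⦃β⦄, coeff β (v - u) ≠ 0 → Finsupp.weight w β < e

theorem isLeadingForm_weightedHomogeneousComponent [SemilatticeSup M] [OrderBot M] (w : σ → M)
    (f : MvPolynomial σ R) :
    IsLeadingForm w (weightedTotalDegree w f) f
      (weightedHomogeneousComponent w (weightedTotalDegree w f) f) := by
  classical
  refine ⟨weightedHomogeneousComponent_isWeightedHomogeneous _ f, fun β hβ => ?_⟩
  rw [coeff_sub, coeff_weightedHomogeneousComponent] at hβ
  split_ifs at hβ with hweight
  · exact absurd (sub_self _) hβ
  · rw [sub_zero] at hβ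
    exact lt_of_le_of_ne (le_weightedTotalDegree w (mem_support_iff.mpr hβ)) hweight

namespace IsLeadingForm

-- If `d < w i`, the truncated degree `d - w i` is harmless: both partial derivatives vanish.
protected theorem pderiv {w : σ → ℕ} {d : ℕ} {f g : MvPolynomial σ R} (h : IsLeadingForm w d f g)
    (i : σ) : IsLeadingForm w (d - w i) (pderiv i f) (pderiv i g) := by
  have weight_add_single (β : σ →₀ ℕ) :
      Finsupp.weight w (β + Finsupp.single i 1) = Finsupp.weight w β + w i := by
    rw [map_add, Finsupp.weight_single, one_smul]
  constructor
  · intro β hβ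
    rw [coeff_pderiv] at hβ
    have hweight := h.isWeightedHomogeneous (left_ne_zero_of_mul hβ)
    rw [weight_add_single] at hweight
    exact Nat.eq_sub_of_add_eq hweight
  · intro β hβ
    rw [← map_sub, coeff_pderiv] at hβ
    have hweight := h.weight_lt (left_ne_zero_of_mul hβ)
    rw [weight_add_single] at hweight
    exact Nat.lt_sub_of_add_lt hweight

variable [Preorder M] [AddLeftStrictMono M] {w : σ → M}

protected theorem monomial_mul {e : M} {v u : MvPolynomial σ R} (h : IsLeadingForm w e v u)
    (γ : σ →₀ ℕ) (c : R) :
    IsLeadingForm w (Finsupp.weight w γ + e) (monomial γ c * v) (monomial γ c * u) := by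
  classical
  refine ⟨(isWeightedHomogeneous_monomial w γ c rfl).mul h.isWeightedHomogeneous, fun β hβ => ?_⟩
  rw [← mul_sub, coeff_monomial_mul'] at hβ
  split_ifs at hβ with hγβ
  · have hweight := h.weight_lt (right_ne_zero_of_mul hβ)
    rw [← add_tsub_cancel_of_le hγβ, map_add]
    exact add_lt_add_right hweight _
  · exact absurd rfl hβ

theorem weightedHomogeneousComponent_mul_mem_sup {e : M} {v u : MvPolynomial σ R}
    (h : IsLeadingForm w e v u) {I : Ideal (MvPolynomial σ R)} (hv : v ∈ I) (m : M)
    (p : MvPolynomial σ R) :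
    weightedHomogeneousComponent w m (p * u) ∈
      I.restrictScalars R ⊔ restrictSupport R {β | Finsupp.weight w β < m} := by
  induction p using MvPolynomial.induction_on' with
  | add p q hp hq =>
    rw [add_mul, map_add]
    exact add_mem hp hq
  | monomial γ c =>
    obtain ⟨hhom, hlower⟩ := h.monomial_mul γ c
    by_cases hm : m = Finsupp.weight w γ + e
    · rw [hm, hhom.weightedHomogeneousComponent_same,
        ← sub_sub_cancel (monomial γ c * v) (monomial γ c * u)]
      refine sub_mem (Submodule.mem_sup_left (I.mul_mem_left _ hv)) (Submodule.mem_sup_right ?_)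
      exact (mem_restrictSupport_iff R).mpr fun β hβ => hlower (mem_support_iff.mp hβ)
    · rw [hhom.weightedHomogeneousComponent_ne m hm]
      exact zero_mem _

theorem weightedHomogeneousComponent_mem_sup {e : ι → M} {v u : ι → MvPolynomial σ R}
    (h : ∀ j, IsLeadingForm w (e j) (v j) (u j)) (m : M) {p : MvPolynomial σ R}
    (hp : p ∈ Ideal.span (Set.range u)) :
    weightedHomogeneousComponent w m p ∈ (Ideal.span (Set.range v)).restrictScalars R ⊔
      restrictSupport R {β | Finsupp.weight w β < m} := by
  obtain ⟨c, rfl⟩ := Finsupp.mem_ideal_span_range_iff_exists_finsupp.mp hp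
  rw [Finsupp.sum, map_sum]
  refine sum_mem fun j _ => (h j).weightedHomogeneousComponent_mul_mem_sup ?_ m (c j)
  exact Ideal.subset_span (Set.mem_range_self j)

theorem span_sup_restrictSupport_eq_top [WellFoundedLT M] {e : ι → M}
    {v u : ι → MvPolynomial σ R} (h : ∀ j, IsLeadingForm w (e j) (v j) (u j)) :
    (Ideal.span (Set.range v)).restrictScalars R ⊔
      restrictSupport R {β | monomial β 1 ∉ Ideal.span (Set.range u)} = ⊤ := by
  set U := (Ideal.span (Set.range v)).restrictScalars R ⊔
    restrictSupport R {β | monomial β 1 ∉ Ideal.span (Set.range u)}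
  have monomial_mem (m : M) : ∀ β, Finsupp.weight w β = m → monomial β 1 ∈ U := by
    induction m using WellFoundedLT.induction with
    | ind m ih =>
    intro β hβ
    by_cases hmem : monomial β 1 ∈ Ideal.span (Set.range u)
    · have hlower : restrictSupport R {γ | Finsupp.weight w γ < m} ≤ U :=
        restrictSupport_le_iff.mpr fun γ hγ => ih _ hγ γ rfl
      have hcomponent := weightedHomogeneousComponent_mem_sup h m hmem
      rw [(isWeightedHomogeneous_monomial w β 1 hβ).weightedHomogeneousComponent_same]
        at hcomponent
      exact sup_le le_sup_left hlower hcomponent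
    · exact Submodule.mem_sup_right (restrictSupport_le_iff.mp le_rfl β hmem)
  rw [eq_top_iff, ← restrictSupport_univ, restrictSupport_le_iff]
  exact fun β _ => monomial_mem _ β rfl

end IsLeadingForm

end LeadingForm

section ZeroLocus

theorem finite_setOf_monomial_notMem [CommSemiring R] [Finite σ] {I : Ideal (MvPolynomial σ R)}
    (hI : ∀ i, X i ∈ I.radical) : {β : σ →₀ ℕ | monomial β 1 ∉ I}.Finite := by
  classical
  choose N hN using hI
  refine (Set.finite_Iic (Finsupp.equivFunOnFinite.symm N)).subset fun β hβ i => ?_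
  contrapose! hβ
  have hle : Finsupp.single i (N i) ≤ β := Finsupp.single_le_iff.mpr hβ.le
  rw [Set.mem_ofPred_eq, not_not, ← tsub_add_cancel_of_le hle, ← one_mul (1 : R), ← monomial_mul,
    ← X_pow_eq_monomial]
  exact I.mul_mem_left _ (hN i)

theorem X_mem_radical_of_zeroLocus_subset [Field k] [Field K] [Algebra k K] [IsAlgClosed K]
    [Finite σ] {I : Ideal (MvPolynomial σ k)} (hI : zeroLocus K I ⊆ {0}) (i : σ) :
    X i ∈ I.radical := by
  rw [← vanishingIdeal_zeroLocus_eq_radical (K := K)]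
  intro x hx
  rw [aeval_X, hI hx, Pi.zero_apply]

theorem finite_quotient_of_sup_eq_top {A : Type*} [CommRing R] [CommRing A] [Algebra R A]
    {I : Ideal A} {N : Submodule R A} (hN : N.FG) (h : I.restrictScalars R ⊔ N = ⊤) :
    Module.Finite R (A ⧸ I) := by
  have hmap : N.map (I.restrictScalars R).mkQ = ⊤ := Submodule.map_mkQ_eq_top _ _ |>.mpr h
  exact ⟨hmap ▸ hN.map _⟩

theorem finite_zeroLocus_of_finite_quotient [Field k] [Field K] [Algebra k K]
    (I : Ideal (MvPolynomial σ k)) [Module.Finite k (MvPolynomial σ k ⧸ I)] :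
    (zeroLocus K I).Finite := by
  let evalAt (x : zeroLocus K I) : MvPolynomial σ k ⧸ I →ₐ[k] K :=
    Ideal.Quotient.liftₐ I (aeval x.1) x.2
  have evalAt_X (x : zeroLocus K I) (i : σ) : evalAt x (Ideal.Quotient.mk I (X i)) = x.1 i :=
    aeval_X x.1 i
  have evalAt_injective : Function.Injective evalAt := fun x y hxy =>
    Subtype.ext <| funext fun i => by rw [← evalAt_X, hxy, evalAt_X]
  exact Set.finite_coe_iff.mp (Finite.of_injective evalAt evalAt_injective)

theorem IsLeadingForm.finite_zeroLocus [Field k] [Field K] [Algebra k K] [IsAlgClosed K] [Finite σ]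
    [AddCommMonoid M] [Preorder M] [AddLeftStrictMono M] [WellFoundedLT M]
    {w : σ → M} {e : ι → M} {v u : ι → MvPolynomial σ k}
    (h : ∀ j, IsLeadingForm w (e j) (v j) (u j))
    (hu : zeroLocus K (Ideal.span (Set.range u)) ⊆ {0}) :
    (zeroLocus K (Ideal.span (Set.range v))).Finite := by
  have hfinite : {β : σ →₀ ℕ | monomial β (1 : k) ∉ Ideal.span (Set.range u)}.Finite :=
    finite_setOf_monomial_notMem (X_mem_radical_of_zeroLocus_subset hu)
  have := finite_quotient_of_sup_eq_top (restrictSupport_fg hfinite)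
    (span_sup_restrictSupport_eq_top h)
  exact finite_zeroLocus_of_finite_quotient _

end ZeroLocus

theorem sing_finite_of_strongly_tame_general [Field k] [Field K] [Algebra k K] [IsAlgClosed K]
    [Finite σ] {w : σ → ℕ} {d : ℕ} {f g : MvPolynomial σ k} (hg : IsLeadingForm w d f g)
    (htame : ∀ x : σ → K, (∀ i, aeval x (pderiv i g) = 0) → x = 0) :
    {x : σ → K | ∀ i, aeval x (pderiv i f) = 0}.Finite := by
  have hzero : zeroLocus K (Ideal.span (Set.range fun i => pderiv i g)) ⊆ {0} := by
    simpa only [zeroLocus_span, Set.forall_mem_range, Set.subset_singleton_iff,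
      Set.mem_ofPred_eq] using htame
  simpa only [zeroLocus_span, Set.forall_mem_range] using
    IsLeadingForm.finite_zeroLocus (fun i => hg.pderiv i) hzero

/-- For a strongly tame polynomial `f` in `n+1` variables (i.e. the last
quasi-homogeneous part `g` of `f`, with respect to the weights `α`, has the origin as its
only singularity), the set `Sing(f)` of common zeros of the partial derivatives of `f`
is finite. -/
theorem sing_finite_of_strongly_tame
    (n : ℕ) (hn : 1 ≤ n) (α : Fin (n + 1) → ℕ)
    (hαpos : ∀ i, 0 < α i) (hα : Finset.univ.gcd α = 1)
    (f : MvPolynomial (Fin (n + 1)) ℂ) (d : ℕ)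
    (hd : MvPolynomial.weightedTotalDegree α f = d)
    (g : MvPolynomial (Fin (n + 1)) ℂ)
    (hg : g = weightedHomogeneousComponent α d f)
    (hg0 : g ≠ 0)
    (htame : ∀ x : Fin (n + 1) → ℂ, (∀ i, eval x (pderiv i g) = 0) → x = 0) :
    {x : Fin (n + 1) → ℂ | ∀ i, eval x (pderiv i f) = 0}.Finite := by
  subst hd hg
  exact sing_finite_of_strongly_tame_general (isLeadingForm_weightedHomogeneousComponent α f) htame
end

section
/- Let f ∈ ℂ[x₁,…,x_{n+1}] be a strongly tame polynomial and let c ∈ ℂ be a value that is not a critical value of f (i.e., c ∉ f(Sing(f))). Then the fiber L_c := f^{-1}(c) ⊆ ℂ^{n+1} is nonempty and connected. -/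
open MvPolynomial

/-!
Tameness makes the leading form of `f`, which is also that of `f - c`, squarefree: a repeated factor
would make all its partial derivatives vanish along a hypersurface. Suppose the zero set of
`F = f - c` is the union of disjoint nonempty closed sets `A` and `B`. Choose a direction `v` such
that `t ↦ F (x + t • v)` is monic in `t` up to a constant, and multiply the linear factors belonging
to the roots with `x + t • v ∈ A`. The coefficients of this product are entire functions of `x`,
because coprime factorizations of monic polynomials depend holomorphically on the product, and they
have polynomial growth, so they are polynomials by Liouville's theorem. Hence `F = P * Q` with zero
sets `A` and `B`. The leading forms of `P` and `Q` are coprime, which excludes a Bézout relation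
between `P` and `Q`; by the Nullstellensatz they have a common zero, contradicting the disjointness
of `A` and `B`.
-/

section LeadingForm

open scoped Polynomial

variable {σ R : Type*}

/-- The algebra map `xᵢ ↦ xᵢ T ^ wᵢ`, which records the grading by the weights `w` as the degree in
an auxiliary variable `T`; it makes the theory of leading coefficients of univariate polynomials
available for weighted degrees. -/
noncomputable def weightedExpansion [CommSemiring R] (w : σ → ℕ) :
    MvPolynomial σ R →ₐ[R] (MvPolynomial σ R)[X] :=
  aeval fun i => Polynomial.C (X i) * Polynomial.X ^ w i

/-- The leading form of `p` for the weights `w`: its weighted homogeneous component of highest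
degree. -/
noncomputable def leadingForm [CommSemiring R] (w : σ → ℕ) (p : MvPolynomial σ R) :
    MvPolynomial σ R :=
  weightedHomogeneousComponent w (weightedTotalDegree w p) p

section CommSemiring

variable [CommSemiring R] (w : σ → ℕ)

theorem weightedExpansion_monomial (m : σ →₀ ℕ) (a : R) :
    weightedExpansion w (monomial m a) =
      Polynomial.monomial (Finsupp.weight w m) (monomial m a) := by
  rw [weightedExpansion, aeval_monomial, Polynomial.algebraMap_apply, algebraMap_eq,
    ← Polynomial.C_mul_X_pow_eq_monomial, monomial_eq, Finsupp.weight_apply]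
  simp only [mul_pow, Finsupp.prod_mul, map_mul, ← pow_mul]
  simp only [Finsupp.prod, Finsupp.sum, Finset.prod_pow_eq_pow_sum, map_prod, map_pow,
    smul_eq_mul, mul_comm, mul_left_comm]

theorem coeff_weightedExpansion (p : MvPolynomial σ R) (k : ℕ) :
    (weightedExpansion w p).coeff k = weightedHomogeneousComponent w k p := by
  classical
  induction p using MvPolynomial.induction_on' with
  | monomial m a =>
    rw [weightedExpansion_monomial, Polynomial.coeff_monomial, weightedHomogeneousComponent_of_mem
      (isWeightedHomogeneous_monomial w m a rfl)]
    exact if_congr eq_comm rfl rfl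
  | add p q hp hq => rw [map_add, map_add, Polynomial.coeff_add, hp, hq]

theorem weightedExpansion_injective :
    Function.Injective (weightedExpansion w : MvPolynomial σ R → _) := by
  intro p q h
  rw [← finsum_weightedHomogeneousComponent w p, ← finsum_weightedHomogeneousComponent w q]
  simp only [← coeff_weightedExpansion, h]

theorem leadingForm_ne_zero {p : MvPolynomial σ R} (hp : p ≠ 0) : leadingForm w p ≠ 0 := by
  classical
  obtain ⟨m, hm, hmax⟩ := Finset.exists_mem_eq_sup p.support (support_nonempty.2 hp)
    (Finsupp.weight w)
  refine ne_zero_iff.2 ⟨m, ?_⟩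
  rw [leadingForm, coeff_weightedHomogeneousComponent, weightedTotalDegree, if_pos hmax.symm]
  exact mem_support_iff.1 hm

theorem natDegree_weightedExpansion (p : MvPolynomial σ R) :
    (weightedExpansion w p).natDegree = weightedTotalDegree w p := by
  rcases eq_or_ne p 0 with rfl | hp
  · rw [map_zero, Polynomial.natDegree_zero, weightedTotalDegree_zero, Nat.bot_eq_zero]
  refine Polynomial.natDegree_eq_of_le_of_coeff_ne_zero ?_ ?_
  · refine Polynomial.natDegree_le_iff_coeff_eq_zero.2 fun k hk => ?_
    exact (coeff_weightedExpansion w p k).trans (weightedHomogeneousComponent_eq_zero k p hk)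
  · rw [coeff_weightedExpansion]
    exact leadingForm_ne_zero w hp

theorem leadingCoeff_weightedExpansion (p : MvPolynomial σ R) :
    (weightedExpansion w p).leadingCoeff = leadingForm w p := by
  rw [Polynomial.leadingCoeff, natDegree_weightedExpansion, coeff_weightedExpansion, leadingForm]

theorem weightedExpansion_leadingForm (p : MvPolynomial σ R) :
    weightedExpansion w (leadingForm w p) =
      Polynomial.monomial (weightedTotalDegree w p) (leadingForm w p) := by
  classical
  have hhom : IsWeightedHomogeneous w (leadingForm w p) (weightedTotalDegree w p) :=
    weightedHomogeneousComponent_isWeightedHomogeneous _ _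
  ext1 k
  rw [coeff_weightedExpansion, weightedHomogeneousComponent_of_mem hhom, Polynomial.coeff_monomial]
  exact if_congr eq_comm rfl rfl

theorem weightedTotalDegree_leadingForm (p : MvPolynomial σ R) :
    weightedTotalDegree w (leadingForm w p) = weightedTotalDegree w p := by
  rcases eq_or_ne p 0 with rfl | hp
  · rw [leadingForm, map_zero]
  · rw [← natDegree_weightedExpansion, weightedExpansion_leadingForm,
      Polynomial.natDegree_monomial_eq _ (leadingForm_ne_zero w hp)]

theorem leadingForm_leadingForm (p : MvPolynomial σ R) :
    leadingForm w (leadingForm w p) = leadingForm w p := by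
  rw [← leadingCoeff_weightedExpansion, weightedExpansion_leadingForm,
    Polynomial.leadingCoeff_monomial]

end CommSemiring

section IsDomain

variable [CommRing R] [IsDomain R] (w : σ → ℕ)

theorem leadingForm_mul (p q : MvPolynomial σ R) :
    leadingForm w (p * q) = leadingForm w p * leadingForm w q := by
  simp only [← leadingCoeff_weightedExpansion, map_mul, Polynomial.leadingCoeff_mul]

theorem weightedTotalDegree_mul {p q : MvPolynomial σ R} (hp : p ≠ 0) (hq : q ≠ 0) :
    weightedTotalDegree w (p * q) = weightedTotalDegree w p + weightedTotalDegree w q := by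
  have hinj := weightedExpansion_injective (R := R) w
  simp only [← natDegree_weightedExpansion, map_mul]
  exact Polynomial.natDegree_mul ((map_ne_zero_iff _ hinj).2 hp) ((map_ne_zero_iff _ hinj).2 hq)

theorem weightedTotalDegree_eq_zero_of_isUnit {p : MvPolynomial σ R} (hp : IsUnit p) :
    weightedTotalDegree w p = 0 := by
  rw [← natDegree_weightedExpansion]
  exact Polynomial.natDegree_eq_zero_of_isUnit (hp.map _)

theorem leadingForm_eq_neg_of_add_eq_one {p q : MvPolynomial σ R} (h : p + q = 1)
    (hp : weightedTotalDegree w p ≠ 0) : leadingForm w q = -leadingForm w p := by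
  rw [← leadingCoeff_weightedExpansion, ← leadingCoeff_weightedExpansion,
    ← Polynomial.leadingCoeff_neg, eq_sub_of_add_eq' h, map_sub, map_one, sub_eq_add_neg]
  refine Polynomial.leadingCoeff_add_of_degree_lt ?_
  rw [Polynomial.degree_one, Polynomial.degree_neg, ← Polynomial.natDegree_pos_iff_degree_pos,
    natDegree_weightedExpansion]
  exact Nat.pos_of_ne_zero hp

theorem exists_degree_sub_mul_lt {u p : MvPolynomial σ R} (hu : u ≠ 0)
    (h : leadingForm w p ∣ leadingForm w u) :
    ∃ q, (weightedExpansion w (u - q * p)).degree < (weightedExpansion w u).degree := by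
  obtain ⟨q, hq⟩ := h
  have hpq : leadingForm w p * q ≠ 0 := hq ▸ leadingForm_ne_zero w hu
  have hp0 := left_ne_zero_of_mul hpq
  have hp : p ≠ 0 := fun h0 => hp0 (by rw [h0, leadingForm, map_zero])
  have hq0 := right_ne_zero_of_mul hpq
  have hq_lead : leadingForm w q = q := by
    refine mul_left_cancel₀ hp0 ?_
    rw [← hq, ← leadingForm_leadingForm, ← leadingForm_mul, ← hq, leadingForm_leadingForm]
  have hdeg : weightedTotalDegree w u = weightedTotalDegree w (q * p) := by
    rw [← weightedTotalDegree_leadingForm, hq, weightedTotalDegree_mul w hp0 hq0,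
      weightedTotalDegree_leadingForm, weightedTotalDegree_mul w hq0 hp, add_comm]
  refine ⟨q, ?_⟩
  have hinj := weightedExpansion_injective (R := R) w
  rw [map_sub]
  refine Polynomial.degree_sub_lt_left ?_ ((map_ne_zero_iff _ hinj).2 hu) ?_
  · rw [Polynomial.degree_eq_natDegree ((map_ne_zero_iff _ hinj).2 hu),
      Polynomial.degree_eq_natDegree ((map_ne_zero_iff _ hinj).2 (mul_ne_zero hq0 hp)),
      natDegree_weightedExpansion, natDegree_weightedExpansion, hdeg]
  · rw [leadingCoeff_weightedExpansion, leadingCoeff_weightedExpansion, leadingForm_mul, hq_lead,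
      hq, mul_comm]

/-- In a Bézout relation `u * p + v * q = 1` the leading forms of `u * p` and `v * q` cancel, so the
leading form of `q` divides that of `u`, and `u` can be replaced by a polynomial of smaller
degree. -/
theorem not_isCoprime_of_isRelPrime_leadingForm [UniqueFactorizationMonoid R]
    {p q : MvPolynomial σ R} (hp : weightedTotalDegree w p ≠ 0) (hq : weightedTotalDegree w q ≠ 0)
    (h : IsRelPrime (leadingForm w p) (leadingForm w q)) : ¬ IsCoprime p q := by
  have hp0 : p ≠ 0 := fun h0 => hp (by rw [h0, weightedTotalDegree_zero, Nat.bot_eq_zero])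
  suffices H : ∀ (N : WithBot ℕ) (u v : MvPolynomial σ R),
      (weightedExpansion w u).degree = N → u * p + v * q ≠ 1 from
    fun ⟨u, v, huv⟩ => H _ u v rfl huv
  intro N
  induction N using WellFoundedLT.induction with
  | _ N ih =>
  intro u v huN huv
  have hu : u ≠ 0 := by
    rintro rfl
    rw [zero_mul, zero_add] at huv
    exact hq (weightedTotalDegree_eq_zero_of_isUnit w (IsUnit.of_mul_eq_one_right v huv))
  have hlead : leadingForm w (v * q) = -leadingForm w (u * p) := by
    refine leadingForm_eq_neg_of_add_eq_one w huv ?_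
    rw [weightedTotalDegree_mul w hu hp0]
    exact (Nat.add_pos_right _ (Nat.pos_of_ne_zero hp)).ne'
  rw [leadingForm_mul, leadingForm_mul] at hlead
  have hdvd : leadingForm w q ∣ leadingForm w u :=
    h.symm.dvd_of_dvd_mul_right (dvd_neg.1 (hlead ▸ dvd_mul_left _ _))
  obtain ⟨t, ht⟩ := exists_degree_sub_mul_lt w hu hdvd
  exact ih _ (huN ▸ ht) (u - t * q) (v + t * p) rfl (by rw [← huv]; ring)

end IsDomain

theorem weightedTotalDegree_sub_C [CommRing R] (w : σ → ℕ) (p : MvPolynomial σ R) (a : R) :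
    weightedTotalDegree w (p - C a) = weightedTotalDegree w p := by
  rw [← natDegree_weightedExpansion, map_sub, ← algebraMap_eq, AlgHom.commutes,
    Polynomial.algebraMap_apply, Polynomial.natDegree_sub_C, natDegree_weightedExpansion]

theorem leadingForm_sub_C [CommRing R] (w : σ → ℕ) {p : MvPolynomial σ R}
    (hp : weightedTotalDegree w p ≠ 0) (a : R) : leadingForm w (p - C a) = leadingForm w p := by
  rw [← leadingCoeff_weightedExpansion, ← leadingCoeff_weightedExpansion, map_sub, ← algebraMap_eq,
    AlgHom.commutes, Polynomial.algebraMap_apply, Polynomial.leadingCoeff,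
    Polynomial.natDegree_sub_C, Polynomial.coeff_sub, Polynomial.coeff_C_of_ne_zero, sub_zero,
    Polynomial.leadingCoeff]
  rwa [natDegree_weightedExpansion]

theorem exists_eq_C_of_weightedTotalDegree_eq_zero [CommSemiring R] {w : σ → ℕ}
    (hw : ∀ i, 0 < w i) {p : MvPolynomial σ R} (hp : weightedTotalDegree w p = 0) :
    ∃ a, p = C a := by
  have hw' : NonTorsionWeight w := nonTorsionWeight_of fun i => (hw i).ne'
  refine ⟨_, totalDegree_eq_zero_iff_eq_C.1 ((totalDegree_eq_zero_iff _ p).2 ?_)⟩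
  exact (weightedTotalDegree_eq_zero_iff hw' p).1 hp

theorem weightedTotalDegree_ne_zero_of_eval_eq_zero [CommSemiring R] {w : σ → ℕ}
    (hw : ∀ i, 0 < w i) {p : MvPolynomial σ R} (hp : p ≠ 0) {x : σ → R} (hx : eval x p = 0) :
    weightedTotalDegree w p ≠ 0 := by
  intro hdeg
  obtain ⟨a, rfl⟩ := exists_eq_C_of_weightedTotalDegree_eq_zero hw hdeg
  rw [eval_C] at hx
  exact hp (by rw [hx, C_0])

theorem weightedTotalDegree_ne_zero_of_forall_pderiv_eq_zero [CommSemiring R] [Nontrivial R]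
    [Nonempty σ] {w : σ → ℕ} (hw : ∀ i, 0 < w i) {f : MvPolynomial σ R}
    (htame : ∀ x : σ → R, (∀ i, eval x (pderiv i (leadingForm w f)) = 0) → x = 0) :
    weightedTotalDegree w f ≠ 0 := by
  intro hdeg
  rw [← weightedTotalDegree_leadingForm] at hdeg
  obtain ⟨a, ha⟩ := exists_eq_C_of_weightedTotalDegree_eq_zero hw hdeg
  exact one_ne_zero (htame 1 fun i => by rw [ha, pderiv_C, map_zero])

end LeadingForm

section Nullstellensatz

variable {σ K : Type*} [Finite σ] [Field K] [IsAlgClosed K]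

theorem isCoprime_of_forall_eval_ne_zero {p q : MvPolynomial σ K}
    (h : ∀ x : σ → K, eval x p = 0 → eval x q ≠ 0) : IsCoprime p q := by
  have hmem : (1 : MvPolynomial σ K) ∈ (Ideal.span {p, q}).radical := by
    rw [← vanishingIdeal_zeroLocus_eq_radical (K := K)]
    intro x hx
    exact absurd (hx q (Ideal.subset_span (by simp))) (h x (hx p (Ideal.subset_span (by simp))))
  obtain ⟨N, hN⟩ := hmem
  rw [one_pow] at hN
  exact Ideal.mem_span_pair.1 hN

theorem exists_eval_eq_zero {p : MvPolynomial σ K} (hp : ¬ IsUnit p) :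
    ∃ x : σ → K, eval x p = 0 := by
  by_contra! h
  exact hp (isCoprime_self.1 (isCoprime_of_forall_eval_ne_zero fun x _ => h x))

/-- By the Nullstellensatz `p` divides powers of two different, hence coprime, variables. -/
theorem isUnit_of_forall_eval_eq_zero [Nontrivial σ] {p : MvPolynomial σ K}
    (h : ∀ x : σ → K, eval x p = 0 → x = 0) : IsUnit p := by
  have hdvd (i : σ) : ∃ N, p ∣ X i ^ N := by
    have hmem : X i ∈ (Ideal.span {p}).radical := by
      rw [← vanishingIdeal_zeroLocus_eq_radical (K := K)]
      intro x hx
      rw [h x (hx p (Ideal.mem_span_singleton_self p)), aeval_X, Pi.zero_apply]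
    exact hmem.imp fun N => Ideal.mem_span_singleton.1
  obtain ⟨i, j, hij⟩ := exists_pair_ne σ
  obtain ⟨M, hM⟩ := hdvd i
  obtain ⟨N, hN⟩ := hdvd j
  have hrel : IsRelPrime (X i : MvPolynomial σ K) (X j) := by
    rwa [(X_prime (i := i)).irreducible.isRelPrime_iff_not_dvd, X_dvd_X]
  exact hrel.pow hM hN

theorem squarefree_of_forall_pderiv_eq_zero [Nontrivial σ] {p : MvPolynomial σ K}
    (h : ∀ x : σ → K, (∀ i, eval x (pderiv i p) = 0) → x = 0) : Squarefree p := by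
  rintro q ⟨r, rfl⟩
  refine isUnit_of_forall_eval_eq_zero fun x hx => h x fun i => ?_
  simp only [Derivation.leibniz, smul_eq_mul, map_add, map_mul, hx, zero_mul, mul_zero, add_zero]

theorem exists_common_zero_of_squarefree_leadingForm_mul {w : σ → ℕ} {p q : MvPolynomial σ K}
    (hp : weightedTotalDegree w p ≠ 0) (hq : weightedTotalDegree w q ≠ 0)
    (h : Squarefree (leadingForm w (p * q))) : ∃ x : σ → K, eval x p = 0 ∧ eval x q = 0 := by
  by_contra! hne
  rw [leadingForm_mul] at h
  exact not_isCoprime_of_isRelPrime_leadingForm w hp hq (squarefree_mul_iff.1 h).1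
    (isCoprime_of_forall_eval_ne_zero hne)

end Nullstellensatz

section Liouville

open scoped Polynomial

theorem iteratedDeriv_eq_zero_of_norm_le_mul_pow {h : ℂ → ℂ} (hd : Differentiable ℂ h) {C : ℝ}
    {N k : ℕ} (hb : ∀ z, ‖h z‖ ≤ C * (1 + ‖z‖) ^ N) (hk : N < k) : iteratedDeriv k h 0 = 0 := by
  have hC : 0 ≤ C := by simpa using (norm_nonneg _).trans (hb 0)
  have cauchy_estimate (R : ℝ) (hR : 1 ≤ R) :
      ‖iteratedDeriv k h 0‖ ≤ (k.factorial * (C * 2 ^ N)) / R := by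
    have hsphere : ∀ z ∈ Metric.sphere (0 : ℂ) R, ‖h z‖ ≤ C * (2 * R) ^ N := fun z hz => by
      rw [mem_sphere_zero_iff_norm] at hz
      refine (hb z).trans ?_
      rw [hz]
      gcongr
      linarith
    calc ‖iteratedDeriv k h 0‖ ≤ k.factorial * (C * (2 * R) ^ N) / R ^ k :=
          Complex.norm_iteratedDeriv_le_of_forall_mem_sphere_norm_le k (by linarith)
            hd.diffContOnCl hsphere
      _ ≤ k.factorial * (C * (2 * R) ^ N) / R ^ (N + 1) := by
          gcongr
          exact hk
      _ = k.factorial * (C * 2 ^ N) / R := by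
          rw [mul_pow, pow_succ]
          field_simp
  have hlim : Filter.Tendsto (fun R : ℝ => (k.factorial * (C * 2 ^ N)) / R) Filter.atTop
      (nhds 0) :=
    tendsto_const_nhds.div_atTop Filter.tendsto_id
  exact norm_le_zero_iff.1
    (ge_of_tendsto hlim ((Filter.eventually_ge_atTop 1).mono cauchy_estimate))

theorem exists_polynomial_of_norm_le_mul_pow {h : ℂ → ℂ} (hd : Differentiable ℂ h) {C : ℝ} {N : ℕ}
    (hb : ∀ z, ‖h z‖ ≤ C * (1 + ‖z‖) ^ N) :
    ∃ p : ℂ[X], p.degree < (N + 1 : ℕ) ∧ ∀ z, p.eval z = h z := by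
  refine ⟨∑ k ∈ Finset.range (N + 1),
    Polynomial.monomial k ((k.factorial : ℂ)⁻¹ * iteratedDeriv k h 0), ?_, fun z => ?_⟩
  · refine Polynomial.mem_degreeLT.1 (Submodule.sum_mem _ fun k hk => Polynomial.mem_degreeLT.2 ?_)
    exact (Polynomial.degree_monomial_le _ _).trans_lt (Nat.cast_lt.2 (Finset.mem_range.1 hk))
  · rw [← Complex.taylorSeries_eq_of_entire' 0 z hd, tsum_eq_sum (s := Finset.range (N + 1))]
    · simp only [Polynomial.eval_finsetSum, Polynomial.eval_monomial, sub_zero]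
    · intro k hk
      rw [iteratedDeriv_eq_zero_of_norm_le_mul_pow hd hb
        (Nat.lt_of_succ_le (not_lt.1 (mt Finset.mem_range.2 hk))), mul_zero, zero_mul]

/-- Lagrange interpolation in the first variable. -/
theorem exists_mvPolynomial_of_slices {K : Type*} [Field K] [Infinite K] {m N : ℕ}
    {h : (Fin (m + 1) → K) → K}
    (hhead : ∀ y, ∃ p : K[X], p.degree < N ∧ ∀ t, p.eval t = h (Fin.cons t y))
    (htail : ∀ t, ∃ P : MvPolynomial (Fin m) K, ∀ y, eval y P = h (Fin.cons t y)) :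
    ∃ P : MvPolynomial (Fin (m + 1)) K, ∀ x, eval x P = h x := by
  classical
  choose P hP using htail
  obtain ⟨s, rfl⟩ := Infinite.exists_subset_card_eq K N
  refine ⟨∑ t ∈ s, rename Fin.succ (P t) * Polynomial.aeval (X 0) (Lagrange.basis s id t),
    fun x => ?_⟩
  obtain ⟨t₀, y, rfl⟩ : ∃ t y, x = Fin.cons t y := ⟨x 0, Fin.tail x, (Fin.cons_self_tail x).symm⟩
  obtain ⟨p, hp_deg, hp⟩ := hhead y
  have heval (q : K[X]) :
      eval (Fin.cons t₀ y : Fin (m + 1) → K) (Polynomial.aeval (X 0) q) = q.eval t₀ := by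
    rw [← coe_aeval_eq_eval, RingHom.coe_coe, ← Polynomial.aeval_algHom_apply, aeval_X,
      Fin.cons_zero, Polynomial.coe_aeval_eq_eval]
  rw [← hp, Lagrange.eq_interpolate (Set.injOn_id _) hp_deg, Lagrange.interpolate_apply,
    Polynomial.eval_finsetSum, map_sum]
  refine Finset.sum_congr rfl fun t _ => ?_
  rw [map_mul, heval, eval_rename, Polynomial.eval_mul, Polynomial.eval_C, id, hp, ← hP]
  rfl

theorem one_add_norm_finCons_le {E : Type*} [SeminormedAddGroup E] {m : ℕ} (t : E)
    (y : Fin m → E) : 1 + ‖(Fin.cons t y : Fin (m + 1) → E)‖ ≤ (1 + ‖t‖) * (1 + ‖y‖) := by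
  have hmul : 0 ≤ ‖t‖ * ‖y‖ := by positivity
  have hnorm : ‖(Fin.cons t y : Fin (m + 1) → E)‖ ≤ ‖t‖ + ‖y‖ := by
    refine (pi_norm_le_iff_of_nonneg (by positivity)).2 fun i => ?_
    refine Fin.cases ?_ (fun j => ?_) i
    · exact le_add_of_nonneg_right (norm_nonneg y)
    · exact (norm_le_pi_norm y j).trans (le_add_of_nonneg_left (norm_nonneg t))
  linarith

theorem exists_mvPolynomial_fin_of_norm_le_mul_pow {m : ℕ} {h : (Fin m → ℂ) → ℂ}
    (hd : Differentiable ℂ h) {C : ℝ} {N : ℕ} (hb : ∀ x, ‖h x‖ ≤ C * (1 + ‖x‖) ^ N) :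
    ∃ P : MvPolynomial (Fin m) ℂ, ∀ x, eval x P = h x := by
  induction m generalizing C with
  | zero => exact ⟨MvPolynomial.C (h 0), fun x => by rw [eval_C, Subsingleton.elim x 0]⟩
  | succ m ih =>
    have hC : 0 ≤ C := by simpa using (norm_nonneg _).trans (hb 0)
    have hb' (t : ℂ) (y : Fin m → ℂ) :
        ‖h (Fin.cons t y)‖ ≤ C * ((1 + ‖t‖) ^ N * (1 + ‖y‖) ^ N) := by
      refine (hb _).trans ?_
      rw [← mul_pow]
      gcongr
      exact one_add_norm_finCons_le t y
    have hcons : Differentiable ℂ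
        fun p : ℂ × (Fin m → ℂ) => (Fin.cons p.1 p.2 : Fin (m + 1) → ℂ) := by
      refine differentiable_pi.2 fun i => Fin.cases ?_ (fun j => ?_) i
      · exact differentiable_fst
      · exact differentiable_pi.1 differentiable_snd j
    refine exists_mvPolynomial_of_slices (N := N + 1) (fun y => ?_) fun t => ?_
    · refine exists_polynomial_of_norm_le_mul_pow (C := C * (1 + ‖y‖) ^ N)
        (hd.comp (hcons.comp (differentiable_id.prodMk (differentiable_const y)))) fun t => ?_
      exact (hb' t y).trans_eq (by ring)
    · refine ih (C := C * (1 + ‖t‖) ^ N)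
        (hd.comp (hcons.comp ((differentiable_const t).prodMk differentiable_id))) fun y => ?_
      exact (hb' t y).trans_eq (by ring)

theorem exists_mvPolynomial_of_norm_le_mul_pow {σ : Type*} [Fintype σ] {h : (σ → ℂ) → ℂ}
    (hd : Differentiable ℂ h) {C : ℝ} {N : ℕ} (hb : ∀ x, ‖h x‖ ≤ C * (1 + ‖x‖) ^ N) :
    ∃ P : MvPolynomial σ ℂ, ∀ x, eval x P = h x := by
  let e := Fintype.equivFin σ
  have hreindex : Differentiable ℂ fun y : Fin (Fintype.card σ) → ℂ => y ∘ e :=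
    differentiable_pi.2 fun i => differentiable_apply (e i)
  have hC : 0 ≤ C := by simpa using (norm_nonneg _).trans (hb 0)
  have hnorm (y : Fin (Fintype.card σ) → ℂ) : ‖y ∘ e‖ ≤ ‖y‖ :=
    (pi_norm_le_iff_of_nonneg (norm_nonneg y)).2 fun i => norm_le_pi_norm y (e i)
  obtain ⟨P, hP⟩ := exists_mvPolynomial_fin_of_norm_le_mul_pow (hd.comp hreindex) (C := C) (N := N)
    fun y => (hb _).trans (by gcongr; exact hnorm y)
  refine ⟨rename e.symm P, fun x => ?_⟩
  rw [eval_rename, hP, Function.comp_apply, Function.comp_assoc, e.symm_comp_self, Function.comp_id]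

end Liouville

section Factorization

open scoped Polynomial Topology

open Polynomial (IsMonicOfDegree)

section Field

variable {K : Type*} [Field K]

/-- The polynomial of degree less than `k` with coefficients `a`. -/
noncomputable def polynomialOfCoeffs (k : ℕ) : (Fin k → K) →ₗ[K] K[X] :=
  (Polynomial.degreeLT K k).subtype ∘ₗ (Polynomial.degreeLTEquiv K k).symm.toLinearMap

/-- The monic polynomial of degree `k` with non-leading coefficients `a`. -/
noncomputable def monicOfCoeffs (k : ℕ) (a : Fin k → K) : K[X] :=
  Polynomial.X ^ k + polynomialOfCoeffs k a

theorem degree_polynomialOfCoeffs_lt {k : ℕ} (a : Fin k → K) :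
    (polynomialOfCoeffs k a).degree < k :=
  Polynomial.mem_degreeLT.1 ((Polynomial.degreeLTEquiv K k).symm a).2

theorem coeff_polynomialOfCoeffs {k : ℕ} (a : Fin k → K) (j : Fin k) :
    (polynomialOfCoeffs k a).coeff j = a j :=
  congrFun ((Polynomial.degreeLTEquiv K k).apply_symm_apply a) j

theorem polynomialOfCoeffs_eq_zero_iff {k : ℕ} {a : Fin k → K} :
    polynomialOfCoeffs k a = 0 ↔ a = 0 := by
  refine ⟨fun h => funext fun j => ?_, fun h => h ▸ map_zero _⟩
  rw [← coeff_polynomialOfCoeffs a j, h, Polynomial.coeff_zero, Pi.zero_apply]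

theorem isMonicOfDegree_monicOfCoeffs {k : ℕ} (a : Fin k → K) :
    IsMonicOfDegree (monicOfCoeffs k a) k where
  natDegree_eq := by
    rw [monicOfCoeffs, Polynomial.natDegree_add_eq_left_of_degree_lt, Polynomial.natDegree_X_pow]
    exact (degree_polynomialOfCoeffs_lt a).trans_eq (Polynomial.degree_X_pow k).symm
  monic := Polynomial.monic_X_pow_add (degree_polynomialOfCoeffs_lt a)

theorem eq_of_isMonicOfDegree_of_coeff_eq {p q : K[X]} {k : ℕ} (hp : IsMonicOfDegree p k)
    (hq : IsMonicOfDegree q k) (h : ∀ j : Fin k, p.coeff j = q.coeff j) : p = q := by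
  ext j
  rcases lt_or_ge j k with hj | hj
  exacts [h ⟨j, hj⟩, hp.coeff_eq hq hj]

theorem monicOfCoeffs_coeff {p : K[X]} {k : ℕ} (hp : IsMonicOfDegree p k) :
    monicOfCoeffs k (fun j => p.coeff j) = p := by
  refine eq_of_isMonicOfDegree_of_coeff_eq (isMonicOfDegree_monicOfCoeffs _) hp fun j => ?_
  rw [monicOfCoeffs, Polynomial.coeff_add, Polynomial.coeff_X_pow, if_neg j.2.ne, zero_add,
    coeff_polynomialOfCoeffs]

/-- The differential at `(p, q)` of the multiplication of monic polynomials of degrees `m` and `n`,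
in the coordinates given by the non-leading coefficients. -/
noncomputable def mulDifferential (m n : ℕ) (p q : K[X]) :
    (Fin m → K) × (Fin n → K) →ₗ[K] Fin (m + n) → K :=
  LinearMap.pi fun j => Polynomial.lcoeff K j ∘ₗ
    (LinearMap.mulLeft K p ∘ₗ polynomialOfCoeffs n ∘ₗ LinearMap.snd K _ _ +
      LinearMap.mulLeft K q ∘ₗ polynomialOfCoeffs m ∘ₗ LinearMap.fst K _ _)

theorem degree_mul_polynomialOfCoeffs_lt {p : K[X]} {m n : ℕ} (hp : IsMonicOfDegree p m)
    (a : Fin n → K) : (p * polynomialOfCoeffs n a).degree < (m + n : ℕ) := by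
  rw [Polynomial.degree_mul, Polynomial.degree_eq_natDegree hp.monic.ne_zero, hp.natDegree_eq,
    Nat.cast_add]
  exact WithBot.add_lt_add_left (WithBot.natCast_ne_bot m) (degree_polynomialOfCoeffs_lt a)

theorem mulDifferential_injective {m n : ℕ} {p q : K[X]} (hp : IsMonicOfDegree p m)
    (hq : IsMonicOfDegree q n) (hpq : IsCoprime p q) :
    Function.Injective (mulDifferential m n p q) := by
  rw [injective_iff_map_eq_zero]
  rintro ⟨u, v⟩ huv
  have hsum : p * polynomialOfCoeffs n v + q * polynomialOfCoeffs m u = 0 := by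
    ext j
    rcases lt_or_ge j (m + n) with hj | hj
    · exact congrFun huv ⟨j, hj⟩
    · refine Polynomial.coeff_eq_zero_of_degree_lt (lt_of_lt_of_le ?_ (Nat.cast_le.2 hj))
      refine (Polynomial.degree_add_le _ _).trans_lt (max_lt ?_ ?_)
      · exact degree_mul_polynomialOfCoeffs_lt hp v
      · exact (degree_mul_polynomialOfCoeffs_lt hq u).trans_eq (by rw [add_comm])
  have hv : polynomialOfCoeffs n v = 0 := by
    refine Polynomial.eq_zero_of_dvd_of_degree_lt (p := q) (hpq.symm.dvd_of_dvd_mul_left ?_) ?_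
    · exact (dvd_add_left (dvd_mul_right q _)).1 (hsum ▸ dvd_zero q)
    · rw [Polynomial.degree_eq_natDegree hq.monic.ne_zero, hq.natDegree_eq]
      exact degree_polynomialOfCoeffs_lt v
  have hu : polynomialOfCoeffs m u = 0 := by
    rw [hv, mul_zero, zero_add] at hsum
    exact (mul_eq_zero.1 hsum).resolve_left hq.monic.ne_zero
  exact Prod.ext (polynomialOfCoeffs_eq_zero_iff.1 hu) (polynomialOfCoeffs_eq_zero_iff.1 hv)

end Field

section NormedField

variable {𝕜 E : Type*} [NontriviallyNormedField 𝕜] [NormedAddCommGroup E] [NormedSpace 𝕜 E]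

theorem exists_differentiableAt_lift {V W : Type*} [NormedAddCommGroup V] [NormedSpace 𝕜 V]
    [CompleteSpace V] [NormedAddCommGroup W] [NormedSpace 𝕜 W] {F : V → W} {F' : V ≃L[𝕜] W}
    {x₀ : V} (hF : HasStrictFDerivAt F (F' : V →L[𝕜] W) x₀) {φ : E → W} {s₀ : E}
    (hφ : DifferentiableAt 𝕜 φ s₀) (hφ₀ : φ s₀ = F x₀) :
    ∃ x : E → V, DifferentiableAt 𝕜 x s₀ ∧ x s₀ = x₀ ∧ ∀ᶠ s in 𝓝 s₀, F (x s) = φ s := by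
  refine ⟨fun s => hF.localInverse F F' x₀ (φ s), DifferentiableAt.comp s₀ ?_ hφ, ?_, ?_⟩
  · rw [hφ₀]
    exact hF.to_localInverse.differentiableAt
  · exact (congrArg _ hφ₀).trans hF.localInverse_apply_image
  · exact hφ.continuousAt.eventually (hφ₀ ▸ hF.eventually_right_inverse)

variable [CompleteSpace 𝕜]

theorem hasStrictFDerivAt_coeff_add_linearMap [FiniteDimensional 𝕜 E] (p : 𝕜[X]) (P : E →ₗ[𝕜] 𝕜[X])
    (x : E) (k : ℕ) :
    HasStrictFDerivAt (fun y => (p + P y).coeff k)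
      (LinearMap.toContinuousLinearMap (Polynomial.lcoeff 𝕜 k ∘ₗ P)) x :=
  (LinearMap.toContinuousLinearMap (Polynomial.lcoeff 𝕜 k ∘ₗ P)).hasStrictFDerivAt.const_add
    (p.coeff k)

theorem hasStrictFDerivAt_coeff_mul [FiniteDimensional 𝕜 E] (p q : 𝕜[X]) (P Q : E →ₗ[𝕜] 𝕜[X])
    (x : E) (k : ℕ) :
    HasStrictFDerivAt (fun y => ((p + P y) * (q + Q y)).coeff k)
      (LinearMap.toContinuousLinearMap (Polynomial.lcoeff 𝕜 k ∘ₗ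
        (LinearMap.mulLeft 𝕜 (p + P x) ∘ₗ Q + LinearMap.mulLeft 𝕜 (q + Q x) ∘ₗ P))) x := by
  simp only [Polynomial.coeff_mul]
  refine (HasStrictFDerivAt.fun_sum fun i _ =>
    (hasStrictFDerivAt_coeff_add_linearMap p P x i.1).fun_mul
      (hasStrictFDerivAt_coeff_add_linearMap q Q x i.2)).congr_fderiv ?_
  ext u
  have hcomm : (q + Q x) * P u = P u * (q + Q x) := mul_comm _ _
  simp only [FunLike.coe_sum, Finset.sum_apply, add_apply,
    smul_apply, LinearMap.coe_toContinuousLinearMap', LinearMap.comp_apply,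
    LinearMap.add_apply, LinearMap.mulLeft_apply, Polynomial.lcoeff_apply, smul_eq_mul, hcomm,
    Polynomial.coeff_add, Polynomial.coeff_mul, Finset.sum_add_distrib]
  exact congrArg _ (Finset.sum_congr rfl fun i _ => mul_comm _ _)

theorem hasStrictFDerivAt_mul_monicOfCoeffs {m n : ℕ} (x : (Fin m → 𝕜) × (Fin n → 𝕜)) :
    HasStrictFDerivAt
      (fun (y : (Fin m → 𝕜) × (Fin n → 𝕜)) (j : Fin (m + n)) =>
        (monicOfCoeffs m y.1 * monicOfCoeffs n y.2).coeff j)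
      (LinearMap.toContinuousLinearMap
        (mulDifferential m n (monicOfCoeffs m x.1) (monicOfCoeffs n x.2))) x := by
  refine hasStrictFDerivAt_pi'.2 fun j => ?_
  have h := hasStrictFDerivAt_coeff_mul (Polynomial.X ^ m) (Polynomial.X ^ n)
    (polynomialOfCoeffs m ∘ₗ LinearMap.fst 𝕜 _ _) (polynomialOfCoeffs n ∘ₗ LinearMap.snd 𝕜 _ _) x j
  exact h.congr_fderiv (by ext <;> rfl)

theorem differentiableAt_coeff_monicOfCoeffs {k : ℕ} {a : E → Fin k → 𝕜} {s : E}
    (ha : DifferentiableAt 𝕜 a s) (j : ℕ) :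
    DifferentiableAt 𝕜 (fun y => (monicOfCoeffs k (a y)).coeff j) s := by
  have h := hasStrictFDerivAt_coeff_add_linearMap (Polynomial.X ^ k) (polynomialOfCoeffs k) (a s) j
  have hcomp := h.differentiableAt.comp s ha
  exact hcomp

/-- Coprimality makes the differential of multiplication invertible, so that the factorization at
`s₀` extends to nearby parameters by the inverse function theorem. -/
theorem exists_differentiableAt_factorization {m n : ℕ} {Φ : E → 𝕜[X]} {s₀ : E} {p q : 𝕜[X]}
    (hΦ : ∀ s, IsMonicOfDegree (Φ s) (m + n))
    (hd : ∀ j, DifferentiableAt 𝕜 (fun s => (Φ s).coeff j) s₀) (hp : IsMonicOfDegree p m)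
    (hq : IsMonicOfDegree q n) (hpq : IsCoprime p q) (h : p * q = Φ s₀) :
    ∃ P Q : E → 𝕜[X], (∀ s, IsMonicOfDegree (P s) m) ∧ (∀ s, IsMonicOfDegree (Q s) n) ∧
      (∀ j, DifferentiableAt 𝕜 (fun s => (P s).coeff j) s₀) ∧
      (∀ j, DifferentiableAt 𝕜 (fun s => (Q s).coeff j) s₀) ∧
      P s₀ = p ∧ Q s₀ = q ∧ ∀ᶠ s in 𝓝 s₀, P s * Q s = Φ s := by
  let x₀ : (Fin m → 𝕜) × (Fin n → 𝕜) := (fun j => p.coeff j, fun j => q.coeff j)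
  have hp₀ : monicOfCoeffs m x₀.1 = p := monicOfCoeffs_coeff hp
  have hq₀ : monicOfCoeffs n x₀.2 = q := monicOfCoeffs_coeff hq
  let L : ((Fin m → 𝕜) × (Fin n → 𝕜)) ≃L[𝕜] (Fin (m + n) → 𝕜) :=
    (LinearEquiv.ofInjectiveOfFinrankEq (mulDifferential m n p q)
      (mulDifferential_injective hp hq hpq) (by simp)).toContinuousLinearEquiv
  have hF := hasStrictFDerivAt_mul_monicOfCoeffs x₀
  rw [hp₀, hq₀] at hF
  obtain ⟨x, hx, hx₀, hmul⟩ := exists_differentiableAt_lift (F' := L) hF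
    (φ := fun s (j : Fin (m + n)) => (Φ s).coeff j) (differentiableAt_pi.2 fun j => hd j)
    (by rw [hp₀, hq₀, h])
  refine ⟨fun s => monicOfCoeffs m (x s).1, fun s => monicOfCoeffs n (x s).2,
    fun s => isMonicOfDegree_monicOfCoeffs _, fun s => isMonicOfDegree_monicOfCoeffs _,
    differentiableAt_coeff_monicOfCoeffs hx.fst, differentiableAt_coeff_monicOfCoeffs hx.snd,
    by simp only [hx₀, hp₀], by simp only [hx₀, hq₀], hmul.mono fun s hs => ?_⟩
  exact eq_of_isMonicOfDegree_of_coeff_eq ((isMonicOfDegree_monicOfCoeffs _).mul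
    (isMonicOfDegree_monicOfCoeffs _)) (hΦ s) fun j => congrFun hs j

end NormedField

end Factorization

section RootFactor

open scoped Polynomial Topology

open Polynomial (IsMonicOfDegree)

section Field

variable {K : Type*} [Field K]

open Classical in
/-- The monic polynomial whose roots are the roots of `Φ` lying in `S`, with multiplicity. -/
noncomputable def rootFactor (Φ : K[X]) (S : Set K) : K[X] :=
  ((Φ.roots.filter (· ∈ S)).map fun t => Polynomial.X - Polynomial.C t).prod

theorem monic_rootFactor (Φ : K[X]) (S : Set K) : (rootFactor Φ S).Monic :=
  Polynomial.monic_multisetProd_X_sub_C _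

theorem isRoot_rootFactor_iff {Φ : K[X]} (hΦ : Φ ≠ 0) {S : Set K} {t : K} :
    (rootFactor Φ S).IsRoot t ↔ Φ.IsRoot t ∧ t ∈ S := by
  classical
  rw [← Polynomial.mem_roots (monic_rootFactor Φ S).ne_zero, rootFactor,
    Polynomial.roots_multiset_prod_X_sub_C, Multiset.mem_filter, Polynomial.mem_roots hΦ]

theorem coeff_zero_rootFactor_eq_zero_iff {Φ : K[X]} (hΦ : Φ ≠ 0) {S : Set K} :
    (rootFactor Φ S).coeff 0 = 0 ↔ Φ.IsRoot 0 ∧ 0 ∈ S := by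
  rw [Polynomial.coeff_zero_eq_eval_zero, ← Polynomial.IsRoot.def, isRoot_rootFactor_iff hΦ]

variable [IsAlgClosed K]

theorem rootFactor_mul_rootFactor {Φ : K[X]} (hΦ : Φ.Monic) {S T : Set K} (hST : Disjoint S T)
    (hroot : ∀ t, Φ.IsRoot t → t ∈ S ∪ T) : rootFactor Φ S * rootFactor Φ T = Φ := by
  classical
  have hT : Φ.roots.filter (· ∈ T) = Φ.roots.filter (¬ · ∈ S) := Multiset.filter_congr fun t ht =>
    ⟨fun htT => Set.disjoint_right.1 hST htT,
      (hroot t (Polynomial.isRoot_of_mem_roots ht)).resolve_left⟩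
  rw [rootFactor, rootFactor, hT, ← Multiset.prod_add, ← Multiset.map_add, Multiset.filter_add_not]
  exact ((IsAlgClosed.splits Φ).eq_prod_roots_of_monic hΦ).symm

theorem isCoprime_rootFactor {Φ : K[X]} (hΦ : Φ ≠ 0) {S T : Set K} (hST : Disjoint S T) :
    IsCoprime (rootFactor Φ S) (rootFactor Φ T) := by
  refine (Polynomial.isCoprime_iff_aeval_ne_zero_of_isAlgClosed K K _ _).2 fun t => ?_
  simp only [Polynomial.coe_aeval_eq_eval, ← not_and_or, ne_eq]
  rintro ⟨hS, hT⟩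
  exact Set.disjoint_left.1 hST ((isRoot_rootFactor_iff hΦ).1 hS).2
    ((isRoot_rootFactor_iff hΦ).1 hT).2

theorem rootFactor_mul_eq_left {p q : K[X]} (hp : p.Monic) (hq : q ≠ 0) {S : Set K}
    (hpS : ∀ t, p.IsRoot t → t ∈ S) (hqS : ∀ t, q.IsRoot t → t ∉ S) :
    rootFactor (p * q) S = p := by
  classical
  rw [rootFactor, Polynomial.roots_mul (mul_ne_zero hp.ne_zero hq), Multiset.filter_add,
    Multiset.filter_eq_self.2 fun t ht => hpS t (Polynomial.isRoot_of_mem_roots ht),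
    Multiset.filter_eq_nil.2 fun t ht => hqS t (Polynomial.isRoot_of_mem_roots ht), add_zero]
  exact ((IsAlgClosed.splits p).eq_prod_roots_of_monic hp).symm

end Field

section NormedField

variable {𝕜 : Type*} [NormedField 𝕜]

theorem norm_le_one_add_sum_of_isRoot {p : 𝕜[X]} {k : ℕ} (hp : IsMonicOfDegree p k) {t : 𝕜}
    (ht : p.IsRoot t) : ‖t‖ ≤ 1 + ∑ j ∈ Finset.range k, ‖p.coeff j‖ := by
  have hsup : (Finset.range k).sup (fun j => ‖p.coeff j‖₊) ≤
      ∑ j ∈ Finset.range k, ‖p.coeff j‖₊ := Finset.sup_le fun j hj =>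
    Finset.single_le_sum (f := fun j => ‖p.coeff j‖₊) (fun _ _ => zero_le) hj
  have hbound := (ht.norm_lt_cauchyBound hp.monic.ne_zero).le
  rw [Polynomial.cauchyBound, hp.monic.leadingCoeff, nnnorm_one, div_one, hp.natDegree_eq] at hbound
  rw [add_comm]
  simpa using NNReal.coe_le_coe.2 (hbound.trans (add_le_add_left hsup 1))

theorem continuousAt_eval_of_isMonicOfDegree {E : Type*} [TopologicalSpace E] {Φ : E → 𝕜[X]} {k : ℕ}
    (hΦ : ∀ s, IsMonicOfDegree (Φ s) k) {s₀ : E}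
    (hc : ∀ j, ContinuousAt (fun s => (Φ s).coeff j) s₀) (t : 𝕜) :
    ContinuousAt (fun z : E × 𝕜 => (Φ z.1).eval z.2) (s₀, t) := by
  simp only [Polynomial.eval_eq_sum_range, (hΦ _).natDegree_eq]
  refine tendsto_finsetSum _ fun j _ => ?_
  exact (ContinuousAt.comp (x := (s₀, t)) (hc j) continuousAt_fst).mul (continuousAt_snd.pow j)

theorem eventually_isRoot_imp_notMem [ProperSpace 𝕜] {E : Type*} [TopologicalSpace E]
    {Φ : E → 𝕜[X]} {k : ℕ} (hΦ : ∀ s, IsMonicOfDegree (Φ s) k) {s₀ : E}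
    (hc : ∀ j, ContinuousAt (fun s => (Φ s).coeff j) s₀) {B : Set (E × 𝕜)} (hB : IsClosed B)
    (h : ∀ t, (Φ s₀).IsRoot t → (s₀, t) ∉ B) :
    ∀ᶠ s in 𝓝 s₀, ∀ t, (Φ s).IsRoot t → (s, t) ∉ B := by
  let R : E → ℝ := fun s => 1 + ∑ j ∈ Finset.range k, ‖(Φ s).coeff j‖
  have hR : ContinuousAt R s₀ :=
    continuousAt_const.add (tendsto_finsetSum _ fun j _ => (hc j).norm)
  have hball : ∀ᶠ s in 𝓝 s₀, ∀ t ∈ Metric.closedBall (0 : 𝕜) (R s₀ + 1),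
      (Φ s).IsRoot t → (s, t) ∉ B := by
    refine (isCompact_closedBall 0 _).eventually_forall_of_forall_eventually fun t _ => ?_
    by_cases ht : (s₀, t) ∈ B
    · filter_upwards [(continuousAt_eval_of_isMonicOfDegree hΦ hc t).eventually_ne
        fun hroot => h t hroot ht] with z hz hroot using absurd hroot hz
    · filter_upwards [hB.isOpen_compl.mem_nhds ht] with z hz _ using hz
  filter_upwards [hball, hR.eventually_lt_const (lt_add_one (R s₀))] with s hs hRs t ht
  refine hs t (mem_closedBall_zero_iff.2 ?_) ht
  exact (norm_le_one_add_sum_of_isRoot (hΦ s) ht).trans hRs.le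

end NormedField

theorem differentiable_coeff_rootFactor {𝕜 E : Type*} [NontriviallyNormedField 𝕜] [IsAlgClosed 𝕜]
    [ProperSpace 𝕜] [NormedAddCommGroup E] [NormedSpace 𝕜 E] {Φ : E → 𝕜[X]} {k : ℕ}
    (hΦ : ∀ s, IsMonicOfDegree (Φ s) k) (hd : ∀ j, Differentiable 𝕜 fun s => (Φ s).coeff j)
    {A B : Set (E × 𝕜)} (hA : IsClosed A) (hB : IsClosed B) (hAB : Disjoint A B)
    (hroot : ∀ s t, (Φ s).IsRoot t → (s, t) ∈ A ∪ B) (j : ℕ) :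
    Differentiable 𝕜 fun s => (rootFactor (Φ s) {t | (s, t) ∈ A}).coeff j := by
  intro s₀
  let S : Set 𝕜 := {t | (s₀, t) ∈ A}
  let T : Set 𝕜 := {t | (s₀, t) ∈ B}
  have hST : Disjoint S T := hAB.preimage (Prod.mk s₀)
  have hne : Φ s₀ ≠ 0 := (hΦ s₀).monic.ne_zero
  have hmul : rootFactor (Φ s₀) S * rootFactor (Φ s₀) T = Φ s₀ :=
    rootFactor_mul_rootFactor (hΦ s₀).monic hST (hroot s₀)
  have hdeg : (rootFactor (Φ s₀) S).natDegree + (rootFactor (Φ s₀) T).natDegree = k := by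
    rw [← (monic_rootFactor _ _).natDegree_mul (monic_rootFactor _ _), hmul, (hΦ s₀).natDegree_eq]
  obtain ⟨P, Q, hP, hQ, hPd, hQd, hP₀, hQ₀, hPQ⟩ := exists_differentiableAt_factorization
    (fun s => hdeg.symm ▸ hΦ s) (fun j => hd j s₀) ⟨rfl, monic_rootFactor (Φ s₀) S⟩
    ⟨rfl, monic_rootFactor (Φ s₀) T⟩ (isCoprime_rootFactor hne hST) hmul
  have hPB : ∀ᶠ s in 𝓝 s₀, ∀ t, (P s).IsRoot t → (s, t) ∉ B := by
    refine eventually_isRoot_imp_notMem hP (fun j => (hPd j).continuousAt) hB fun t ht => ?_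
    exact Set.disjoint_left.1 hST ((isRoot_rootFactor_iff hne).1 (hP₀ ▸ ht)).2
  have hQA : ∀ᶠ s in 𝓝 s₀, ∀ t, (Q s).IsRoot t → (s, t) ∉ A := by
    refine eventually_isRoot_imp_notMem hQ (fun j => (hQd j).continuousAt) hA fun t ht => ?_
    exact Set.disjoint_right.1 hST ((isRoot_rootFactor_iff hne).1 (hQ₀ ▸ ht)).2
  refine (hPd j).congr_of_eventuallyEq ?_
  filter_upwards [hPQ, hPB, hQA] with s hs hsB hsA
  refine congrArg (Polynomial.coeff · j) ?_
  rw [← hs]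
  refine rootFactor_mul_eq_left (hP s).monic (hQ s).monic.ne_zero (fun t ht => ?_) hsA
  have hΦt : (Φ s).IsRoot t := hs ▸ Polynomial.root_mul_right_of_isRoot _ ht
  exact (hroot s t hΦt).resolve_right (hsB t ht)

end RootFactor

section TranslateAlong

open scoped Polynomial

variable {σ R : Type*}

section CommSemiring

variable [CommSemiring R]

/-- The polynomial `F (x + T v)` in the auxiliary variable `T`, with coefficients in `R[x]`. -/
noncomputable def translateAlong (v : σ → R) : MvPolynomial σ R →ₐ[R] (MvPolynomial σ R)[X] :=
  aeval fun i => Polynomial.C (C (v i)) * Polynomial.X + Polynomial.C (X i)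

theorem eval_map_eval_translateAlong (v x : σ → R) (t : R) (F : MvPolynomial σ R) :
    ((translateAlong v F).map (eval x)).eval t = eval (x + t • v) F := by
  have hhom : (Polynomial.evalRingHom t).comp ((Polynomial.mapRingHom (eval x)).comp
      (translateAlong v : MvPolynomial σ R →+* (MvPolynomial σ R)[X])) = eval (x + t • v) := by
    refine MvPolynomial.ringHom_ext (fun a => ?_) fun i => ?_
    · simp [translateAlong, Polynomial.algebraMap_apply, algebraMap_eq]
    · simp [translateAlong, add_comm (x i), mul_comm t]
  exact RingHom.congr_fun hhom F

theorem natDegree_translateAlong_monomial_le (v : σ → R) (u : σ →₀ ℕ) (a : R) :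
    (translateAlong v (monomial u a)).natDegree ≤ u.degree := by
  rw [translateAlong, aeval_monomial, Polynomial.algebraMap_apply]
  refine (Polynomial.natDegree_C_mul_le _ _).trans ((Polynomial.natDegree_prod_le _ _).trans ?_)
  refine Finset.sum_le_sum fun i _ => ?_
  simpa using Polynomial.natDegree_pow_le_of_le (u i)
    (Polynomial.natDegree_linear_le (a := C (v i)) (b := X i))

theorem coeff_translateAlong_monomial (v : σ → R) (u : σ →₀ ℕ) (a : R) :
    (translateAlong v (monomial u a)).coeff u.degree = C (eval v (monomial u a)) := by
  suffices h : (translateAlong v (monomial u 1)).coeff u.degree = C (eval v (monomial u 1)) by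
    rw [← mul_one a, ← smul_eq_mul, ← smul_monomial, map_smul, Polynomial.coeff_smul, h,
      smul_eval, C_mul, smul_eq_C_mul]
  induction u using Finsupp.induction_linear with
  | zero => simp
  | add f g hf hg =>
    rw [← one_mul (1 : R), ← monomial_mul, map_mul, map_mul, map_mul, map_add,
      Polynomial.coeff_mul_add_eq_of_natDegree_le (natDegree_translateAlong_monomial_le v f 1)
        (natDegree_translateAlong_monomial_le v g 1), hf, hg]
  | single i k =>
    have hcoeff := Polynomial.coeff_pow_of_natDegree_le (m := k)
      (Polynomial.natDegree_linear_le (a := C (v i)) (b := (X i : MvPolynomial σ R)))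
    rw [mul_one] at hcoeff
    rw [← X_pow_eq_monomial, map_pow, map_pow, translateAlong, aeval_X, Finsupp.degree_single,
      hcoeff]
    simp

theorem natDegree_translateAlong_le (v : σ → R) (F : MvPolynomial σ R) :
    (translateAlong v F).natDegree ≤ weightedTotalDegree 1 F := by
  rw [F.as_sum, map_sum, ← F.as_sum]
  refine Polynomial.natDegree_sum_le_of_forall_le _ _ fun u hu => ?_
  rw [weightedTotalDegree_one]
  exact (natDegree_translateAlong_monomial_le v u _).trans (le_totalDegree hu)

theorem coeff_translateAlong_weightedTotalDegree (v : σ → R) (F : MvPolynomial σ R) :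
    (translateAlong v F).coeff (weightedTotalDegree 1 F) = C (eval v (leadingForm 1 F)) := by
  rw [leadingForm, weightedTotalDegree_one]
  change _ = C (eval v (homogeneousComponent F.totalDegree F))
  rw [homogeneousComponent_apply, map_sum, map_sum, Finset.sum_filter]
  conv_lhs => rw [F.as_sum, map_sum, Polynomial.finsetSum_coeff, ← F.as_sum]
  refine Finset.sum_congr rfl fun u hu => ?_
  split_ifs with h
  · rw [← h, coeff_translateAlong_monomial]
  · refine Polynomial.coeff_eq_zero_of_natDegree_lt ?_
    exact (natDegree_translateAlong_monomial_le v u _).trans_lt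
      (lt_of_le_of_ne (le_totalDegree hu) h)

end CommSemiring

theorem exists_monic_translateAlong {K : Type*} [Field K] [Infinite K] {F : MvPolynomial σ K}
    (hF : F ≠ 0) : ∃ (v : σ → K) (a : K), a ≠ 0 ∧ (translateAlong v (C a * F)).Monic := by
  obtain ⟨v, hv⟩ : ∃ v, eval v (leadingForm 1 F) ≠ 0 := by
    by_contra! h
    exact leadingForm_ne_zero 1 hF (MvPolynomial.funext fun x => by rw [h, map_zero])
  refine ⟨v, (eval v (leadingForm 1 F))⁻¹, inv_ne_zero hv, ?_⟩
  rw [← smul_eq_C_mul, map_smul]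
  refine Polynomial.monic_of_natDegree_le_of_coeff_eq_one (weightedTotalDegree 1 F)
    ((Polynomial.natDegree_smul_le _ _).trans (natDegree_translateAlong_le v F)) ?_
  rw [Polynomial.coeff_smul, coeff_translateAlong_weightedTotalDegree, smul_eq_C_mul, ← C_mul,
    inv_mul_cancel₀ hv, C_1]

end TranslateAlong

section Splitting

open scoped Polynomial

open Polynomial (IsMonicOfDegree)

section Growth

variable {𝕜 σ : Type*} [NormedField 𝕜]

theorem norm_eval_le_mul_pow [Fintype σ] (p : MvPolynomial σ 𝕜) {N : ℕ} (hN : p.totalDegree ≤ N)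
    (x : σ → 𝕜) : ‖eval x p‖ ≤ (∑ u ∈ p.support, ‖p.coeff u‖) * (1 + ‖x‖) ^ N := by
  rw [eval_eq, Finset.sum_mul]
  refine (norm_sum_le _ _).trans (Finset.sum_le_sum fun u hu => ?_)
  rw [norm_mul, norm_prod]
  refine mul_le_mul_of_nonneg_left ?_ (norm_nonneg _)
  calc ∏ i ∈ u.support, ‖x i ^ u i‖ ≤ ∏ i ∈ u.support, (1 + ‖x‖) ^ u i := by
        refine Finset.prod_le_prod (fun i _ => norm_nonneg _) fun i _ => ?_
        rw [norm_pow]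
        exact pow_le_pow_left₀ (norm_nonneg _)
          ((norm_le_pi_norm x i).trans (le_add_of_nonneg_left zero_le_one)) _
    _ = (1 + ‖x‖) ^ u.degree := Finset.prod_pow_eq_pow_sum _ _ _
    _ ≤ (1 + ‖x‖) ^ N :=
        pow_le_pow_right₀ (le_add_of_nonneg_right (norm_nonneg x)) ((le_totalDegree hu).trans hN)

theorem exists_sum_norm_eval_le_mul_pow [Fintype σ] {ι : Type*} (s : Finset ι)
    (p : ι → MvPolynomial σ 𝕜) :
    ∃ (C : ℝ) (N : ℕ), 0 ≤ C ∧ ∀ x, ∑ j ∈ s, ‖eval x (p j)‖ ≤ C * (1 + ‖x‖) ^ N := by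
  refine ⟨∑ j ∈ s, ∑ u ∈ (p j).support, ‖(p j).coeff u‖, s.sup fun j => (p j).totalDegree,
    Finset.sum_nonneg fun j _ => Finset.sum_nonneg fun u _ => norm_nonneg _, fun x => ?_⟩
  rw [Finset.sum_mul]
  exact Finset.sum_le_sum fun j hj => norm_eval_le_mul_pow (p j)
    (Finset.le_sup (f := fun j => (p j).totalDegree) hj) x

theorem norm_coeff_zero_rootFactor_le [IsAlgClosed 𝕜] {Φ : 𝕜[X]} {k : ℕ}
    (hΦ : IsMonicOfDegree Φ k) (S : Set 𝕜) {r : ℝ} (hr : 1 ≤ r)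
    (hroot : ∀ t, Φ.IsRoot t → ‖t‖ ≤ r) : ‖(rootFactor Φ S).coeff 0‖ ≤ r ^ k := by
  have hdeg : (rootFactor Φ S).natDegree ≤ k := by
    have hmul : rootFactor Φ S * rootFactor Φ Sᶜ = Φ :=
      rootFactor_mul_rootFactor hΦ.monic disjoint_compl_right fun t _ => em _
    rw [← hΦ.natDegree_eq]
    exact Polynomial.natDegree_le_of_dvd (Dvd.intro _ hmul) hΦ.monic.ne_zero
  have hbound := Polynomial.coeff_le_of_roots_le (f := RingHom.id 𝕜) (B := r) 0
    (monic_rootFactor Φ S) (IsAlgClosed.splits _) fun t ht => by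
      rw [Polynomial.map_id] at ht
      exact hroot t ((isRoot_rootFactor_iff hΦ.monic.ne_zero).1
        (Polynomial.isRoot_of_mem_roots ht)).1
  rw [Polynomial.map_id, Nat.choose_zero_right, Nat.cast_one, mul_one, Nat.sub_zero] at hbound
  exact hbound.trans (pow_le_pow_right₀ hr hdeg)

theorem exists_norm_coeff_zero_rootFactor_le [Fintype σ] [IsAlgClosed 𝕜]
    {Ψ : (MvPolynomial σ 𝕜)[X]} (hΨ : Ψ.Monic) (S : (σ → 𝕜) → Set 𝕜) :
    ∃ (C : ℝ) (N : ℕ), ∀ x,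
      ‖(rootFactor (Ψ.map (eval x)) (S x)).coeff 0‖ ≤ C * (1 + ‖x‖) ^ N := by
  obtain ⟨C, N, hC, hCN⟩ :=
    exists_sum_norm_eval_le_mul_pow (Finset.range Ψ.natDegree) fun j => Ψ.coeff j
  refine ⟨(1 + C) ^ Ψ.natDegree, N * Ψ.natDegree, fun x => ?_⟩
  have hone : 1 ≤ (1 + ‖x‖) ^ N := one_le_pow₀ (le_add_of_nonneg_right (norm_nonneg x))
  have hmonic : IsMonicOfDegree (Ψ.map (eval x)) Ψ.natDegree :=
    ⟨hΨ.natDegree_map _, hΨ.map _⟩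
  rw [pow_mul, ← mul_pow]
  refine norm_coeff_zero_rootFactor_le hmonic _ ?_ fun t ht => ?_
  · exact one_le_mul_of_one_le_of_one_le (le_add_of_nonneg_right hC) hone
  · refine (norm_le_one_add_sum_of_isRoot hmonic ht).trans ?_
    simp only [Polynomial.coeff_map, add_mul, one_mul]
    exact add_le_add hone (hCN x)

end Growth

theorem differentiable_eval_mvPolynomial {𝕜 σ : Type*} [NontriviallyNormedField 𝕜]
    [CompleteSpace 𝕜] [Finite σ] (p : MvPolynomial σ 𝕜) : Differentiable 𝕜 fun x => eval x p := by
  have := Fintype.ofFinite σ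
  exact fun x => (AnalyticOnNhd.eval_mvPolynomial p x (Set.mem_univ x)).differentiableAt

variable {σ : Type*} [Finite σ]

/-- The constant coefficient is an entire function of polynomial growth, hence a polynomial by
Liouville's theorem. -/
theorem exists_eval_eq_coeff_zero_rootFactor {Ψ : (MvPolynomial σ ℂ)[X]}
    (hΨ : Ψ.Monic) (v : σ → ℂ) {A B : Set (σ → ℂ)} (hA : IsClosed A) (hB : IsClosed B)
    (hAB : Disjoint A B) (hroot : ∀ x t, (Ψ.map (eval x)).IsRoot t → x + t • v ∈ A ∪ B) :
    ∃ P : MvPolynomial σ ℂ, ∀ x,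
      eval x P = (rootFactor (Ψ.map (eval x)) {t | x + t • v ∈ A}).coeff 0 := by
  have := Fintype.ofFinite σ
  have htranslate : Continuous fun z : (σ → ℂ) × ℂ => z.1 + z.2 • v := by fun_prop
  obtain ⟨C, N, hCN⟩ := exists_norm_coeff_zero_rootFactor_le hΨ fun x => {t | x + t • v ∈ A}
  refine exists_mvPolynomial_of_norm_le_mul_pow ?_ hCN
  refine differentiable_coeff_rootFactor (k := Ψ.natDegree)
    (fun x => ⟨hΨ.natDegree_map _, hΨ.map _⟩) (fun j => ?_) (hA.preimage htranslate)
    (hB.preimage htranslate) (hAB.preimage _) hroot 0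
  simp only [Polynomial.coeff_map]
  exact differentiable_eval_mvPolynomial (Ψ.coeff j)

theorem exists_mul_eq_of_monic_translateAlong {F : MvPolynomial σ ℂ} {v : σ → ℂ}
    (hF : (translateAlong v F).Monic) {A B : Set (σ → ℂ)} (hA : IsClosed A) (hB : IsClosed B)
    (hAB : Disjoint A B) (h : {x | eval x F = 0} = A ∪ B) :
    ∃ P Q : MvPolynomial σ ℂ, P * Q = F ∧ {x | eval x P = 0} = A ∧ {x | eval x Q = 0} = B := by
  let Φ : (σ → ℂ) → ℂ[X] := fun x => (translateAlong v F).map (eval x)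
  have hΦ : ∀ x, (Φ x).Monic := fun x => hF.map _
  have hroot : ∀ x t, (Φ x).IsRoot t ↔ x + t • v ∈ A ∪ B := fun x t => by
    rw [← h, Polynomial.IsRoot.def, eval_map_eval_translateAlong, Set.mem_ofPred_eq]
  have hroot₀ : ∀ x, (Φ x).IsRoot 0 ↔ x ∈ A ∪ B := fun x => by rw [hroot, zero_smul, add_zero]
  obtain ⟨P, hP⟩ :=
    exists_eval_eq_coeff_zero_rootFactor hF v hA hB hAB fun x t => (hroot x t).1
  obtain ⟨Q, hQ⟩ := exists_eval_eq_coeff_zero_rootFactor hF v hB hA hAB.symm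
    fun x t => by rw [Set.union_comm]; exact (hroot x t).1
  refine ⟨P, Q, MvPolynomial.funext fun x => ?_, Set.ext fun x => ?_, Set.ext fun x => ?_⟩
  · have hmul := rootFactor_mul_rootFactor (hΦ x) (hAB.preimage fun t : ℂ => x + t • v)
      fun t => (hroot x t).1
    rw [map_mul, hP, hQ, ← Polynomial.mul_coeff_zero]
    refine (congrArg (Polynomial.coeff · 0) hmul).trans ?_
    rw [Polynomial.coeff_zero_eq_eval_zero, eval_map_eval_translateAlong, zero_smul, add_zero]
  · rw [Set.mem_ofPred_eq, hP, coeff_zero_rootFactor_eq_zero_iff (hΦ x).ne_zero, hroot₀,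
      Set.mem_ofPred_eq, zero_smul, add_zero]
    exact and_iff_right_of_imp Or.inl
  · rw [Set.mem_ofPred_eq, hQ, coeff_zero_rootFactor_eq_zero_iff (hΦ x).ne_zero, hroot₀,
      Set.mem_ofPred_eq, zero_smul, add_zero]
    exact and_iff_right_of_imp Or.inr

theorem exists_mul_eq_of_zeros_eq_union {F : MvPolynomial σ ℂ} (hF : F ≠ 0)
    {A B : Set (σ → ℂ)} (hA : IsClosed A) (hB : IsClosed B) (hAB : Disjoint A B)
    (h : {x | eval x F = 0} = A ∪ B) :
    ∃ P Q : MvPolynomial σ ℂ, P * Q = F ∧ {x | eval x P = 0} = A ∧ {x | eval x Q = 0} = B := by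
  obtain ⟨v, a, ha, hmonic⟩ := exists_monic_translateAlong hF
  obtain ⟨P, Q, hPQ, rfl, rfl⟩ := exists_mul_eq_of_monic_translateAlong hmonic hA hB hAB
    (by simpa [ha] using h)
  refine ⟨C a⁻¹ * P, Q, ?_, by simp [ha], rfl⟩
  rw [mul_assoc, hPQ, ← mul_assoc, ← C_mul, inv_mul_cancel₀ ha, C_1, one_mul]

end Splitting

section Fiber

variable {σ : Type*} [Finite σ] {w : σ → ℕ}

theorem isConnected_zeros_of_squarefree_leadingForm (hw : ∀ i, 0 < w i) {F : MvPolynomial σ ℂ}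
    (hF : weightedTotalDegree w F ≠ 0) (hsq : Squarefree (leadingForm w F)) :
    IsConnected {x | eval x F = 0} := by
  have hF₀ : F ≠ 0 := fun h => hF (by rw [h, weightedTotalDegree_zero, Nat.bot_eq_zero])
  have hclosed : IsClosed {x | eval x F = 0} :=
    isClosed_eq (differentiable_eval_mvPolynomial F).continuous continuous_const
  refine ⟨exists_eval_eq_zero fun h => hF (weightedTotalDegree_eq_zero_of_isUnit w h),
    isPreconnected_closed_iff.2 ?_⟩
  rintro A B hA hB hcover ⟨a, haF, haA⟩ ⟨b, hbF, hbB⟩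
  by_contra hempty
  obtain ⟨P, Q, rfl, hPA, hQB⟩ := exists_mul_eq_of_zeros_eq_union hF₀
    (hclosed.inter hA) (hclosed.inter hB)
    (Set.disjoint_left.2 fun x hxA hxB => hempty ⟨x, hxA.1, hxA.2, hxB.2⟩)
    (by rw [← Set.inter_union_distrib_left, Set.inter_eq_left.2 hcover])
  have hPa : eval a P = 0 := hPA.ge ⟨haF, haA⟩
  have hQb : eval b Q = 0 := hQB.ge ⟨hbF, hbB⟩
  obtain ⟨x, hxP, hxQ⟩ := exists_common_zero_of_squarefree_leadingForm_mul
    (weightedTotalDegree_ne_zero_of_eval_eq_zero hw (left_ne_zero_of_mul hF₀) hPa)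
    (weightedTotalDegree_ne_zero_of_eval_eq_zero hw (right_ne_zero_of_mul hF₀) hQb) hsq
  exact hempty ⟨x, (hPA.le hxP).1, (hPA.le hxP).2, (hQB.le hxQ).2⟩

theorem regular_fiber_connected_of_strongly_tame_general (hw : ∀ i, 0 < w i)
    {f : MvPolynomial σ ℂ} (hf : weightedTotalDegree w f ≠ 0)
    (hsq : Squarefree (leadingForm w f)) (c : ℂ) : IsConnected {x : σ → ℂ | eval x f = c} := by
  have hfiber : {x : σ → ℂ | eval x f = c} = {x | eval x (f - C c) = 0} := by
    simp only [map_sub, eval_C, sub_eq_zero]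
  rw [hfiber]
  exact isConnected_zeros_of_squarefree_leadingForm hw (by rwa [weightedTotalDegree_sub_C])
    (by rwa [leadingForm_sub_C w hf])

end Fiber

/-- For a strongly tame polynomial `f` and a regular value `c`
(not a critical value of `f`), the fiber `L_c = f⁻¹(c) ⊆ ℂ^{n+1}` is nonempty
and connected. -/
theorem regular_fiber_connected_of_strongly_tame
    (n : ℕ) (hn : 1 ≤ n) (α : Fin (n + 1) → ℕ)
    (hαpos : ∀ i, 0 < α i) (hα : Finset.univ.gcd α = 1)
    (f : MvPolynomial (Fin (n + 1)) ℂ) (d : ℕ)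
    (hd : MvPolynomial.weightedTotalDegree α f = d)
    (g : MvPolynomial (Fin (n + 1)) ℂ)
    (hg : g = weightedHomogeneousComponent α d f)
    (hg0 : g ≠ 0)
    (htame : ∀ x : Fin (n + 1) → ℂ, (∀ i, eval x (pderiv i g) = 0) → x = 0)
    (c : ℂ)
    (hc : c ∉ (fun x => eval x f) '' {x : Fin (n + 1) → ℂ | ∀ i, eval x (pderiv i f) = 0}) :
    IsConnected {x : Fin (n + 1) → ℂ | eval x f = c} := by
  have : Nontrivial (Fin (n + 1)) := Fin.nontrivial_iff_two_le.2 (Nat.succ_le_succ hn)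
  subst hd hg
  exact regular_fiber_connected_of_strongly_tame_general hαpos
    (weightedTotalDegree_ne_zero_of_forall_pderiv_eq_zero hαpos htame)
    (squarefree_of_forall_pderiv_eq_zero htame) c
end

section
/- Let f ∈ ℂ[x₁,…,x_{n+1}] be a strongly tame polynomial with set of critical values C := f(Sing(f)). Then f is a topologically locally trivial fibration over ℂ ∖ C: for every b ∈ ℂ ∖ C there exist an open neighborhood U ⊆ ℂ ∖ C of b and a homeomorphism φ : f^{-1}(U) → U × f^{-1}(b) such that the first-coordinate projection composed with φ equals the restriction of f to f^{-1}(U). -/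
open MvPolynomial

/-!
Rescaling by the weights, the partial derivatives of `f` converge, uniformly on the unit sphere, to
those of its last quasi-homogeneous part `g`. Since `g` has no critical point on the sphere, the
gradient of `f` is bounded away from zero near infinity (Broughton's tameness), hence also on
`f⁻¹(V)` for a small disc `V` around a noncritical value `b`. There the conjugate gradient divided
by its squared norm is bounded and locally Lipschitz, and `f` has unit derivative along it.
Following `w` times this field for unit time therefore adds `w` to the value of `f`, and moving each
point in this way to the fiber over `b` trivializes `f` over a smaller disc.
-/

open Filter Metric Set
open scoped NNReal Topology ComplexConjugate

section IntegralCurve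

variable {E : Type*} [NormedAddCommGroup E] [NormedSpace ℝ E]

lemma isIntegralCurveOn_Icc_hasDerivWithinAt_Ici {u : ℝ → E → E} {γ : ℝ → E} {a b t : ℝ}
    (hγ : IsIntegralCurveOn γ u (Icc a b)) (ht : t ∈ Ico a b) :
    HasDerivWithinAt γ (u t (γ t)) (Ici t) t :=
  (hγ t (Ico_subset_Icc_self ht)).mono_of_mem_nhdsWithin (Icc_mem_nhdsGE_of_mem ht)

lemma isIntegralCurveOn_Icc_mem_closedBall {u : ℝ → E → E} {γ : ℝ → E} {a b t C R : ℝ}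
    (hγ : IsIntegralCurveOn γ u (Icc a b)) (hu : ∀ t x, ‖u t x‖ ≤ C) (h₀ : ‖γ a‖ ≤ R)
    (ht : t ∈ Icc a b) : γ t ∈ closedBall 0 (R + C * (b - a)) := by
  have hC : 0 ≤ C := (norm_nonneg _).trans (hu 0 0)
  rw [mem_closedBall_zero_iff]
  calc ‖γ t‖ ≤ ‖γ a‖ + ‖γ t - γ a‖ := norm_le_insert' _ _
    _ ≤ R + C * (t - a) :=
      add_le_add h₀ (norm_image_sub_le_of_norm_deriv_le_segment' hγ (fun s _ => hu s _) t ht)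
    _ ≤ R + C * (b - a) := by gcongr; exact ht.2

lemma dist_le_gronwallBound_of_isIntegralCurveOn_Icc {u u' : ℝ → E → E} {γ γ' : ℝ → E}
    {a b t C R ε : ℝ} {K : ℝ≥0} (hγ : IsIntegralCurveOn γ u (Icc a b))
    (hγ' : IsIntegralCurveOn γ' u' (Icc a b)) (hu : ∀ t x, ‖u t x‖ ≤ C)
    (hu' : ∀ t x, ‖u' t x‖ ≤ C) (hε : ∀ t x, dist (u' t x) (u t x) ≤ ε)
    (hK : ∀ t, LipschitzOnWith K (u t) (closedBall 0 (R + C * (b - a))))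
    (h₀ : ‖γ a‖ ≤ R) (h₀' : ‖γ' a‖ ≤ R) (ht : t ∈ Icc a b) :
    dist (γ t) (γ' t) ≤ gronwallBound (dist (γ a) (γ' a)) K ε (t - a) := by
  have bound := dist_le_of_approx_trajectories_ODE_of_mem (εf := 0) (fun t _ => hK t)
    hγ.continuousOn (fun s hs => isIntegralCurveOn_Icc_hasDerivWithinAt_Ici hγ hs)
    (fun s _ => (dist_self _).le)
    (fun s hs => isIntegralCurveOn_Icc_mem_closedBall hγ hu h₀ (Ico_subset_Icc_self hs))
    hγ'.continuousOn (fun s hs => isIntegralCurveOn_Icc_hasDerivWithinAt_Ici hγ' hs)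
    (fun s _ => hε s _)
    (fun s hs => isIntegralCurveOn_Icc_mem_closedBall hγ' hu' h₀' (Ico_subset_Icc_self hs))
    le_rfl t ht
  rwa [zero_add] at bound

lemma exists_isIntegralCurveOn_Icc [CompleteSpace E] {u : E → E} {x : E} {a b : ℝ} {C K : ℝ≥0}
    (hab : a ≤ b) (hu : ∀ y, ‖u y‖ ≤ C) (hK : LipschitzOnWith K u (closedBall x (C * (b - a)))) :
    ∃ γ : ℝ → E, γ a = x ∧ IsIntegralCurveOn γ (fun _ => u) (Icc a b) := by
  obtain ⟨l, hl⟩ : ∃ l : ℝ≥0, (l : ℝ) = b - a := ⟨⟨b - a, sub_nonneg.2 hab⟩, rfl⟩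
  have picard : IsPicardLindelof (fun _ => u) (⟨a, left_mem_Icc.2 hab⟩ : Icc a b) x (C * l) 0 C K :=
    { lipschitzOnWith := fun _ _ => by rwa [NNReal.coe_mul, hl]
      continuousOn := fun _ _ => continuousOn_const
      norm_le := fun _ _ y _ => hu y
      mul_max_le := by simp [hab, hl] }
  exact picard.exists_eq_forall_mem_Icc_hasDerivWithinAt₀

lemma isIntegralCurveOn_comp_const_sub {u : E → E} {γ : ℝ → E} {s : Set ℝ}
    (hγ : IsIntegralCurveOn γ (fun _ => u) s) (c : ℝ) :
    IsIntegralCurveOn (fun t => γ (c - t)) (fun _ => -u) ((c - ·) ⁻¹' s) := fun t ht => by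
  simpa [Function.comp_def] using
    (hγ (c - t) ht).scomp t ((hasDerivWithinAt_id t _).const_sub c) (mapsTo_preimage _ s)

lemma continuous_gronwallBound (K x : ℝ) :
    Continuous fun p : ℝ × ℝ => gronwallBound p.1 K p.2 x := by
  by_cases hK : K = 0
  · simp only [hK, gronwallBound_K0]
    fun_prop
  · simp only [gronwallBound_of_K_ne_0 hK]
    fun_prop

end IntegralCurve

section ScaledFlow

variable {𝕜 E : Type*} [NormedField 𝕜] [NormedAddCommGroup E] [NormedSpace 𝕜 E]
  {v : E → E} {B : ℝ}

lemma norm_smul_apply_le (hB : ∀ x, ‖v x‖ ≤ B) {w : 𝕜} {r : ℝ} (hw : ‖w‖ ≤ r) (x : E) :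
    ‖(w • v) x‖ ≤ r * B := by
  rw [Pi.smul_apply, norm_smul]
  exact mul_le_mul hw (hB x) (norm_nonneg _) ((norm_nonneg w).trans hw)

lemma exists_lipschitzOnWith_smul (hL : ∀ R : ℝ, ∃ K : ℝ≥0, LipschitzOnWith K v (closedBall 0 R))
    (w : 𝕜) (R : ℝ) : ∃ K : ℝ≥0, LipschitzOnWith K (w • v) (closedBall 0 R) :=
  let ⟨K, hK⟩ := hL R
  ⟨‖w‖₊ * K, (lipschitzWith_smul w).comp_lipschitzOnWith hK⟩

variable [NormedSpace ℝ E]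

/-- A choice, for every scalar `w` and every point `x`, of an integral curve `γ w x` of the field
`w • v` over the unit interval with initial point `x`. The maps `x ↦ γ w x 1` take the place of a
flow along `v` with "time" `w` in `𝕜`. -/
structure IsScaledFlow (v : E → E) (γ : 𝕜 → E → ℝ → E) : Prop where
  apply_zero (w : 𝕜) (x : E) : γ w x 0 = x
  isIntegralCurveOn (w : 𝕜) (x : E) : IsIntegralCurveOn (γ w x) (fun _ => w • v) (Icc 0 1)

variable (𝕜) in
lemma exists_isScaledFlow [CompleteSpace E] (hB : ∀ x, ‖v x‖ ≤ B)
    (hL : ∀ R : ℝ, ∃ K : ℝ≥0, LipschitzOnWith K v (closedBall 0 R)) :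
    ∃ γ : 𝕜 → E → ℝ → E, IsScaledFlow v γ := by
  have hB₀ : 0 ≤ B := (norm_nonneg _).trans (hB 0)
  lift B to ℝ≥0 using hB₀
  have exists_curve (w : 𝕜) (x : E) :
      ∃ γ : ℝ → E, γ 0 = x ∧ IsIntegralCurveOn γ (fun _ => w • v) (Icc 0 1) := by
    obtain ⟨K, hK⟩ := exists_lipschitzOnWith_smul hL w (‖w‖ * B * (1 - 0) + ‖x‖)
    exact exists_isIntegralCurveOn_Icc (C := ‖w‖₊ * B) zero_le_one (norm_smul_apply_le hB le_rfl)
      (hK.mono (closedBall_subset_closedBall' (by simp)))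
  choose γ h₀ hγ using exists_curve
  exact ⟨γ, h₀, hγ⟩

namespace IsScaledFlow

variable {γ : 𝕜 → E → ℝ → E}

lemma neg_apply_one (hγ : IsScaledFlow v γ) (hB : ∀ x, ‖v x‖ ≤ B)
    (hL : ∀ R : ℝ, ∃ K : ℝ≥0, LipschitzOnWith K v (closedBall 0 R)) (w : 𝕜) (x : E) :
    γ (-w) (γ w x 1) 1 = x := by
  set y := γ w x 1
  obtain ⟨K, hK⟩ := exists_lipschitzOnWith_smul hL (-w) (‖y‖ + ‖w‖ * B * (1 - 0))
  have bound (_ : ℝ) := norm_smul_apply_le hB (norm_neg w).le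
  have reverse : IsIntegralCurveOn (fun t => γ w x (1 - t)) (fun _ => (-w) • v) (Icc 0 1) := by
    simpa [neg_smul] using isIntegralCurveOn_comp_const_sub (hγ.isIntegralCurveOn w x) 1
  have h := dist_le_gronwallBound_of_isIntegralCurveOn_Icc (hγ.isIntegralCurveOn (-w) y) reverse
    bound bound (fun _ _ => (dist_self _).le) (fun _ => hK) (by rw [hγ.apply_zero])
    (by rw [sub_zero]) (right_mem_Icc.2 zero_le_one)
  rwa [hγ.apply_zero, sub_zero, dist_self, gronwallBound_ε0_δ0, sub_self, hγ.apply_zero,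
    dist_le_zero] at h

lemma continuous_apply_one (hγ : IsScaledFlow v γ) (hB : ∀ x, ‖v x‖ ≤ B)
    (hL : ∀ R : ℝ, ∃ K : ℝ≥0, LipschitzOnWith K v (closedBall 0 R)) :
    Continuous fun p : 𝕜 × E => γ p.1 p.2 1 := by
  rw [continuous_iff_continuousAt]
  rintro ⟨w, x⟩
  obtain ⟨K, hK⟩ := exists_lipschitzOnWith_smul hL w (‖x‖ + 1 + (‖w‖ + 1) * B * (1 - 0))
  have bound_continuous : Continuous fun p : 𝕜 × E =>
      gronwallBound (dist x p.2) K (‖p.1 - w‖ * B) (1 - 0) :=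
    (continuous_gronwallBound K (1 - 0)).comp
      (f := fun p : 𝕜 × E => (dist x p.2, ‖p.1 - w‖ * B)) (by fun_prop)
  rw [ContinuousAt, tendsto_iff_dist_tendsto_zero]
  refine squeeze_zero' (Eventually.of_forall fun _ => dist_nonneg) ?_
    (bound_continuous.tendsto' (w, x) 0 (by simp [gronwallBound_ε0_δ0]))
  filter_upwards [ball_mem_nhds (w, x) one_pos] with ⟨w', x'⟩ hp
  obtain ⟨hw, hx⟩ : dist w' w < 1 ∧ dist x' x < 1 := by
    simpa only [mem_ball, Prod.dist_eq, max_lt_iff] using hp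
  have hw' : ‖w'‖ ≤ ‖w‖ + 1 := by
    linarith [norm_le_insert' w' w, dist_eq_norm w' w]
  have hx' : ‖x'‖ ≤ ‖x‖ + 1 := by
    linarith [norm_le_insert' x' x, dist_eq_norm x' x]
  have field_dist (_ : ℝ) (y : E) : dist ((w' • v) y) ((w • v) y) ≤ ‖w' - w‖ * B := by
    rw [dist_eq_norm, ← Pi.sub_apply, ← sub_smul]
    exact norm_smul_apply_le hB le_rfl y
  have h := dist_le_gronwallBound_of_isIntegralCurveOn_Icc (hγ.isIntegralCurveOn w x)
    (hγ.isIntegralCurveOn w' x') (R := ‖x‖ + 1)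
    (fun _ => norm_smul_apply_le hB (le_add_of_nonneg_right zero_le_one))
    (fun _ => norm_smul_apply_le hB hw') field_dist (fun _ => hK) (by simp [hγ.apply_zero])
    (by rwa [hγ.apply_zero]) (right_mem_Icc.2 zero_le_one)
  rwa [hγ.apply_zero, hγ.apply_zero, dist_comm (γ w x 1)] at h

end IsScaledFlow

end ScaledFlow

section Trivialization

/-- The trivialization over `U` of a map `F` to a group obtained by transporting each point along
the fibers with maps `Φ (w, ·)` that translate the values of `F` by `w`. -/
def homeomorphOfTransport {X G : Type*} [TopologicalSpace X] [AddCommGroup G] [TopologicalSpace G]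
    [IsTopologicalAddGroup G] {F : X → G} (hF : Continuous F) {Φ : G × X → X} (hΦ : Continuous Φ)
    (hneg : ∀ w x, Φ (-w, Φ (w, x)) = x) {U : Set G} {b : G} (hb : b ∈ U)
    (htransport : ∀ w x, F x ∈ U → F x + w ∈ U → F (Φ (w, x)) = F x + w) :
    {x // F x ∈ U} ≃ₜ U × {x // F x = b} where
  toFun x := (⟨F x, x.2⟩, ⟨Φ (b - F x, x), by
    rw [htransport _ _ x.2 (by rwa [add_sub_cancel]), add_sub_cancel]⟩)
  invFun p := ⟨Φ (p.1 - b, p.2), by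
    rw [htransport _ _ (p.2.2.symm ▸ hb) (by simp [p.2.2]), p.2.2, add_sub_cancel]
    exact p.1.2⟩
  left_inv x := Subtype.ext <| by simpa only [neg_sub] using hneg (b - F x) x
  right_inv := by
    rintro ⟨⟨z, hz⟩, ⟨y, rfl⟩⟩
    have value : F (Φ (z - F y, y)) = z := by
      rw [htransport _ _ hb (by rwa [add_sub_cancel]), add_sub_cancel]
    refine Prod.ext (Subtype.ext value) (Subtype.ext ?_)
    simpa only [value, neg_sub] using hneg (z - F y) y
  continuous_toFun := by fun_prop
  continuous_invFun := by fun_prop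

end Trivialization

section Lifting

lemma apply_one_eq_add_of_hasDerivWithinAt_smul {G : Type*} [NormedAddCommGroup G]
    [NormedSpace ℝ G] {h : ℝ → G} {ρ : ℝ → ℝ} {b w : G} {δ : ℝ}
    (hderiv : ∀ t ∈ Icc (0 : ℝ) 1, HasDerivWithinAt h (ρ t • w) (Icc 0 1) t)
    (hρ : ∀ t, |ρ t| ≤ 1) (hρ_one : ∀ t, ‖h t - b‖ < δ → ρ t = 1)
    (hw : ‖h 0 - b‖ + ‖w‖ < δ) : h 1 = h 0 + w := by
  have displacement : ∀ t ∈ Icc (0 : ℝ) 1, ‖h t - h 0‖ ≤ ‖w‖ * (t - 0) :=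
    norm_image_sub_le_of_norm_deriv_le_segment' hderiv fun t _ => by
      rw [norm_smul]
      exact mul_le_of_le_one_left (norm_nonneg _) (hρ t)
  have near : ∀ t ∈ Icc (0 : ℝ) 1, ‖h t - b‖ < δ := fun t ht =>
    calc ‖h t - b‖ ≤ ‖h t - h 0‖ + ‖h 0 - b‖ := norm_sub_le_norm_sub_add_norm_sub _ _ _
      _ ≤ ‖w‖ * (t - 0) + ‖h 0 - b‖ := by gcongr; exact displacement t ht
      _ ≤ ‖w‖ + ‖h 0 - b‖ := by
        gcongr
        exact mul_le_of_le_one_right (norm_nonneg _) (by linarith [ht.2])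
      _ < δ := by rwa [add_comm]
  have deriv_zero : ∀ t ∈ Icc (0 : ℝ) 1,
      HasDerivWithinAt (fun t => h t - t • w) 0 (Icc 0 1) t := fun t ht => by
    simpa [hρ_one t (near t ht)] using
      (hderiv t ht).fun_sub ((hasDerivWithinAt_id t (Icc 0 1)).smul_const w)
  have constant := norm_image_sub_le_of_norm_deriv_le_segment_01' (C := 0) deriv_zero (by simp)
  rw [norm_le_zero_iff, one_smul, zero_smul, sub_zero, sub_sub, sub_eq_zero] at constant
  rw [constant, add_comm]

lemma locallyLipschitz_comp_of_contDiffAt {X E F : Type*} [PseudoEMetricSpace X]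
    [NormedAddCommGroup E] [NormedSpace ℝ E] [NormedAddCommGroup F] [NormedSpace ℝ F]
    {G : E → F} {g : X → E} (hg : LocallyLipschitz g) (hG : ∀ x, ContDiffAt ℝ 1 G (g x)) :
    LocallyLipschitz (G ∘ g) := by
  intro x
  obtain ⟨K, s, hs, hK⟩ := hg x
  obtain ⟨L, t, ht, hL⟩ := (hG x).exists_lipschitzOnWith
  exact ⟨L * K, s ∩ g ⁻¹' t, inter_mem hs (hg.continuous.continuousAt ht),
    hL.comp (hK.mono inter_subset_left) fun _ hy => hy.2⟩

end Lifting

section WeightedHomogeneous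

variable {σ R : Type*}

/-- The weighted scaling `x ↦ (r ^ α i * x i)ᵢ` of affine space by `r`, along which weighted
homogeneous polynomials are homogeneous. -/
def weightedDilation [Monoid R] (α : σ → ℕ) (r : R) (x : σ → R) : σ → R := fun i => r ^ α i * x i

variable {α : σ → ℕ}

lemma weightedDilation_inv_apply [GroupWithZero R] {r : R} (hr : r ≠ 0) (x : σ → R) :
    weightedDilation α r⁻¹ (weightedDilation α r x) = x := by
  ext i
  simp [weightedDilation, inv_mul_cancel_left₀ (pow_ne_zero _ hr)]

lemma weightedDilation_zero_apply [MonoidWithZero R] (hα : ∀ i, 0 < α i) (x : σ → R) :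
    weightedDilation α 0 x = 0 := by
  ext i
  simp [weightedDilation, (hα i).ne']

lemma continuous_weightedDilation [Monoid R] [TopologicalSpace R] [ContinuousMul R] (α : σ → ℕ) :
    Continuous fun p : R × (σ → R) => weightedDilation α p.1 p.2 := by
  unfold weightedDilation
  fun_prop

variable [CommSemiring R] {p : MvPolynomial σ R} {m : ℕ}

lemma eval_weightedDilation (hp : IsWeightedHomogeneous α p m) (r : R) (x : σ → R) :
    eval (weightedDilation α r x) p = r ^ m * eval x p := by
  simp only [eval_eq, Finset.mul_sum]
  refine Finset.sum_congr rfl fun β hβ => ?_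
  have weight_eq : ∑ i ∈ β.support, α i * β i = m := by
    rw [← hp (mem_support_iff.1 hβ), Finsupp.weight_apply]
    simp only [Finsupp.sum, smul_eq_mul, mul_comm]
  simp only [weightedDilation, mul_pow, Finset.prod_mul_distrib, ← pow_mul,
    Finset.prod_pow_eq_pow_sum, weight_eq]
  ring

lemma sum_range_weightedHomogeneousComponent (hp : weightedTotalDegree α p ≤ m) :
    ∑ k ∈ Finset.range (m + 1), weightedHomogeneousComponent α k p = p := by
  have support_subset :
      Function.support (fun k => weightedHomogeneousComponent α k p) ⊆ Finset.range (m + 1) := by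
    intro k hk
    rw [Finset.coe_range, mem_Iio, Nat.lt_succ_iff]
    by_contra! hmk
    exact hk (weightedHomogeneousComponent_eq_zero k p (hp.trans_lt hmk))
  rw [← finsum_eq_sum_of_support_subset _ support_subset, finsum_weightedHomogeneousComponent]

/-- The value at `(s, y)` of the weighted homogenization of `p` to degree `m` by an extra variable
`s` of weight one. Components of `p` of degree above `m` are discarded. -/
noncomputable def weightedHomogenization (α : σ → ℕ) (m : ℕ) (p : MvPolynomial σ R) (s : R)
    (y : σ → R) : R :=
  ∑ k ∈ Finset.range (m + 1), s ^ (m - k) * eval y (weightedHomogeneousComponent α k p)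

lemma weightedHomogenization_zero (α : σ → ℕ) (m : ℕ) (p : MvPolynomial σ R) (y : σ → R) :
    weightedHomogenization α m p 0 y = eval y (weightedHomogeneousComponent α m p) := by
  rw [weightedHomogenization, Finset.sum_range_succ, Finset.sum_eq_zero, zero_add, Nat.sub_self,
    pow_zero, one_mul]
  intro k hk
  rw [zero_pow (Nat.sub_ne_zero_of_lt (Finset.mem_range.1 hk)), zero_mul]

lemma continuous_weightedHomogenization [TopologicalSpace R] [IsTopologicalSemiring R]
    (α : σ → ℕ) (m : ℕ) (p : MvPolynomial σ R) :
    Continuous fun q : R × (σ → R) => weightedHomogenization α m p q.1 q.2 :=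
  continuous_finsetSum _ fun _ _ =>
    (continuous_fst.pow _).mul ((continuous_eval _).comp continuous_snd)

lemma weight_add_le_of_mem_support_pderiv {i : σ} {β : σ →₀ ℕ} (hβ : β ∈ (pderiv i p).support) :
    Finsupp.weight α β + α i ≤ weightedTotalDegree α p := by
  rw [mem_support_iff, coeff_pderiv] at hβ
  simpa [Finsupp.weight_single] using
    le_weightedTotalDegree α (mem_support_iff.2 (left_ne_zero_of_mul hβ))

lemma weightedTotalDegree_pderiv_le (α : σ → ℕ) (i : σ) (p : MvPolynomial σ R) :
    weightedTotalDegree α (pderiv i p) ≤ weightedTotalDegree α p - α i :=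
  Finset.sup_le fun _ hβ => Nat.le_sub_of_add_le (weight_add_le_of_mem_support_pderiv hβ)

lemma weightedHomogeneousComponent_pderiv (α : σ → ℕ) (i : σ) (p : MvPolynomial σ R) :
    weightedHomogeneousComponent α (weightedTotalDegree α p - α i) (pderiv i p) =
      pderiv i (weightedHomogeneousComponent α (weightedTotalDegree α p) p) := by
  classical
  ext β
  by_cases hβ : β ∈ (pderiv i p).support
  · have weight_iff : Finsupp.weight α β = weightedTotalDegree α p - α i ↔
        Finsupp.weight α β + α i = weightedTotalDegree α p := by
      have := weight_add_le_of_mem_support_pderiv (α := α) hβ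
      lia
    simp [coeff_pderiv, coeff_weightedHomogeneousComponent, Finsupp.weight_single, weight_iff]
  · rw [notMem_support_iff, coeff_pderiv] at hβ
    simp [coeff_pderiv, coeff_weightedHomogeneousComponent, hβ]

end WeightedHomogeneous

lemma eval_weightedDilation_eq_mul_weightedHomogenization {σ K : Type*} [Field K] {α : σ → ℕ}
    {p : MvPolynomial σ K} {m : ℕ} (hp : weightedTotalDegree α p ≤ m) {r : K} (hr : r ≠ 0)
    (y : σ → K) :
    eval (weightedDilation α r y) p = r ^ m * weightedHomogenization α m p r⁻¹ y := by
  conv_lhs => rw [← sum_range_weightedHomogeneousComponent hp]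
  rw [map_sum, weightedHomogenization, Finset.mul_sum]
  refine Finset.sum_congr rfl fun k hk => ?_
  rw [eval_weightedDilation (weightedHomogeneousComponent_isWeightedHomogeneous k p), ← mul_assoc,
    inv_pow, ← pow_sub₀ _ hr (Nat.sub_le m k), Nat.sub_sub_self (Finset.mem_range_succ_iff.1 hk)]

lemma norm_weightedHomogenization_le {σ K : Type*} [NormedField K] {α : σ → ℕ}
    {p : MvPolynomial σ K} {m : ℕ} (hp : weightedTotalDegree α p ≤ m) {r : K} (hr : 1 ≤ ‖r‖)
    (y : σ → K) :
    ‖weightedHomogenization α m p r⁻¹ y‖ ≤ ‖eval (weightedDilation α r y) p‖ := by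
  have hr₀ : r ≠ 0 := norm_pos_iff.1 (one_pos.trans_le hr)
  rw [eval_weightedDilation_eq_mul_weightedHomogenization hp hr₀, norm_mul, norm_pow]
  exact le_mul_of_one_le_left (norm_nonneg _) (one_le_pow₀ hr)

lemma exists_weightedDilation_eq {𝕜 σ : Type*} [RCLike 𝕜] [Fintype σ] {α : σ → ℕ}
    (hα : ∀ i, 0 < α i) {x : σ → 𝕜} (hx : x ≠ 0) :
    ∃ r : ℝ, 0 < r ∧ ∃ y : σ → 𝕜, ‖y‖ = 1 ∧ weightedDilation α (r : 𝕜) y = x := by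
  obtain ⟨j, hj⟩ : ∃ j, x j ≠ 0 := Function.ne_iff.1 hx
  set T : ℝ := max 1 ‖x j‖⁻¹
  have hT : 1 ≤ T := le_max_left _ _
  have norm_continuous : Continuous fun r : ℝ => ‖weightedDilation α (r : 𝕜) x‖ :=
    ((continuous_weightedDilation α).comp
      (RCLike.continuous_ofReal.prodMk continuous_const)).norm
  have norm_at_zero : ‖weightedDilation α ((0 : ℝ) : 𝕜) x‖ = 0 := by
    rw [RCLike.ofReal_zero, weightedDilation_zero_apply hα, norm_zero]
  have norm_at_T : 1 ≤ ‖weightedDilation α (T : 𝕜) x‖ :=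
    calc 1 = ‖x j‖⁻¹ * ‖x j‖ := (inv_mul_cancel₀ (norm_ne_zero_iff.2 hj)).symm
      _ ≤ T ^ α j * ‖x j‖ := by
        gcongr
        exact (le_max_right _ _).trans (le_self_pow₀ hT (hα j).ne')
      _ = ‖weightedDilation α (T : 𝕜) x j‖ := by
        rw [weightedDilation, norm_mul, norm_pow, RCLike.norm_ofReal,
          abs_of_nonneg (zero_le_one.trans hT)]
      _ ≤ ‖weightedDilation α (T : 𝕜) x‖ := norm_le_pi_norm _ j
  obtain ⟨s, hs, hs_norm⟩ := intermediate_value_Icc (zero_le_one.trans hT)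
    norm_continuous.continuousOn ⟨norm_at_zero.trans_le zero_le_one, norm_at_T⟩
  have hs₀ : s ≠ 0 := by
    rintro rfl
    exact zero_ne_one (norm_at_zero.symm.trans hs_norm)
  refine ⟨s⁻¹, inv_pos.2 (hs.1.lt_of_ne' hs₀), weightedDilation α (s : 𝕜) x, hs_norm, ?_⟩
  rw [RCLike.ofReal_inv, weightedDilation_inv_apply (RCLike.ofReal_ne_zero.2 hs₀)]

section Tame

variable {𝕜 σ : Type*} [NormedField 𝕜] [Fintype σ]

/-- The squared `ℓ²` norm of the gradient of `f` at `x`. -/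
noncomputable def gradNormSq (f : MvPolynomial σ 𝕜) (x : σ → 𝕜) : ℝ :=
  ∑ i, ‖eval x (pderiv i f)‖ ^ 2

/-- The set of critical values of `f`, regarded as a polynomial map on affine space. -/
def criticalValues {σ R : Type*} [CommSemiring R] (f : MvPolynomial σ R) : Set R :=
  (fun x => eval x f) '' {x | ∀ i, eval x (pderiv i f) = 0}

/-- Tameness in the sense of Broughton: the gradient of `f` is bounded away from zero near
infinity. -/
def IsTame (f : MvPolynomial σ 𝕜) : Prop :=
  ∃ c > 0, ∀ᶠ x in cocompact (σ → 𝕜), c ≤ gradNormSq f x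

lemma gradNormSq_nonneg (f : MvPolynomial σ 𝕜) (x : σ → 𝕜) : 0 ≤ gradNormSq f x :=
  Finset.sum_nonneg fun _ _ => sq_nonneg _

lemma gradNormSq_eq_zero_iff {f : MvPolynomial σ 𝕜} {x : σ → 𝕜} :
    gradNormSq f x = 0 ↔ ∀ i, eval x (pderiv i f) = 0 := by
  simp [gradNormSq, Finset.sum_eq_zero_iff_of_nonneg]

lemma gradNormSq_pos {f : MvPolynomial σ 𝕜} {x : σ → 𝕜} (hx : eval x f ∉ criticalValues f) :
    0 < gradNormSq f x :=
  (gradNormSq_nonneg f x).lt_of_ne' fun h => hx ⟨x, gradNormSq_eq_zero_iff.1 h, rfl⟩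

lemma continuous_gradNormSq (f : MvPolynomial σ 𝕜) : Continuous (gradNormSq f) :=
  continuous_finsetSum _ fun _ _ => (continuous_eval _).norm.pow 2

lemma IsTame.exists_forall_le_gradNormSq_of_norm_sub_lt {f : MvPolynomial σ 𝕜}
    (hf : IsTame f) {b : 𝕜} (hb : b ∉ criticalValues f) :
    ∃ δ > 0, ∃ c > 0, ∀ x, ‖eval x f - b‖ < δ → c ≤ gradNormSq f x := by
  obtain ⟨c, hc, hf⟩ := hf
  obtain ⟨K, hK, hKc⟩ := mem_cocompact.1 hf
  obtain ⟨a, ha, haK⟩ := hK.exists_forall_le' (f := fun x => ‖eval x f - b‖ + gradNormSq f x)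
    (a := 0) (((continuous_eval f).sub continuous_const).norm.add
      (continuous_gradNormSq f)).continuousOn fun x _ => by
    rcases eq_or_ne (eval x f) b with rfl | hx
    · exact add_pos_of_nonneg_of_pos (norm_nonneg _) (gradNormSq_pos hb)
    · exact add_pos_of_pos_of_nonneg (norm_pos_iff.2 (sub_ne_zero.2 hx)) (gradNormSq_nonneg f x)
  refine ⟨a / 2, half_pos ha, min c (a / 2), lt_min hc (half_pos ha), fun x hx => ?_⟩
  by_cases hxK : x ∈ K
  · exact min_le_of_right_le (by linarith [haK x hxK])
  · exact min_le_of_left_le (hKc hxK)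

end Tame

section StronglyTame

/-- The last weighted homogeneous part of `f` has no critical point other than the origin, which
itself need not be critical. -/
def IsStronglyTame {σ R : Type*} [CommSemiring R] (α : σ → ℕ) (f : MvPolynomial σ R) : Prop :=
  ∀ x : σ → R, (∀ i, eval x (pderiv i
    (weightedHomogeneousComponent α (weightedTotalDegree α f) f)) = 0) → x = 0

variable {𝕜 σ : Type*} [RCLike 𝕜] [Fintype σ] {α : σ → ℕ} {f : MvPolynomial σ 𝕜}

lemma IsStronglyTame.exists_eventually_le_gradNormSq_weightedDilation
    (hf : IsStronglyTame α f) :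
    ∃ c > 0, ∀ᶠ r : ℝ in atTop, ∀ y ∈ sphere (0 : σ → 𝕜) 1,
      c ≤ gradNormSq f (weightedDilation α (r : 𝕜) y) := by
  set g := weightedHomogeneousComponent α (weightedTotalDegree α f) f
  set Ψ : ℝ × (σ → 𝕜) → ℝ := fun q => ∑ i,
    ‖weightedHomogenization α (weightedTotalDegree α f - α i) (pderiv i f) (q.1 : 𝕜) q.2‖ ^ 2
  have Ψ_continuous : Continuous Ψ := continuous_finsetSum _ fun i _ =>
    (((continuous_weightedHomogenization α _ (pderiv i f)).comp
      (RCLike.continuous_ofReal.prodMap continuous_id)).norm.pow 2)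
  have Ψ_zero (y : σ → 𝕜) : Ψ (0, y) = gradNormSq g y := by
    simp only [Ψ, RCLike.ofReal_zero, weightedHomogenization_zero,
      weightedHomogeneousComponent_pderiv, gradNormSq, g]
  have Ψ_le {r : ℝ} (hr : 1 ≤ r) (y : σ → 𝕜) :
      Ψ (r⁻¹, y) ≤ gradNormSq f (weightedDilation α (r : 𝕜) y) := by
    refine Finset.sum_le_sum fun i _ => pow_le_pow_left₀ (norm_nonneg _) ?_ 2
    rw [RCLike.ofReal_inv]
    exact norm_weightedHomogenization_le (weightedTotalDegree_pderiv_le α i f)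
      (hr.trans (by simpa using le_abs_self r)) y
  have gradNormSq_pos_of_mem_sphere : ∀ y ∈ sphere (0 : σ → 𝕜) 1, 0 < gradNormSq g y :=
    fun y hy => (gradNormSq_nonneg g y).lt_of_ne' fun h =>
      ne_zero_of_mem_unit_sphere ⟨y, hy⟩ (hf y (gradNormSq_eq_zero_iff.1 h))
  have hsphere : IsCompact (sphere (0 : σ → 𝕜) 1) := isCompact_sphere _ _
  obtain ⟨a, ha, hag⟩ := hsphere.exists_forall_le' (continuous_gradNormSq g).continuousOn
    gradNormSq_pos_of_mem_sphere
  have Ψ_near_zero : ∀ᶠ s in 𝓝 (0 : ℝ), ∀ y ∈ sphere (0 : σ → 𝕜) 1, a / 2 < Ψ (s, y) :=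
    hsphere.eventually_forall_of_forall_eventually fun y hy =>
      Ψ_continuous.continuousAt.eventually_const_lt
        ((half_lt_self ha).trans_le ((hag y hy).trans_eq (Ψ_zero y).symm))
  refine ⟨a / 2, half_pos ha, ?_⟩
  filter_upwards [tendsto_inv_atTop_zero.eventually Ψ_near_zero, eventually_ge_atTop 1]
    with r hΨ hr y hy
  exact (hΨ y hy).le.trans (Ψ_le hr y)

lemma IsStronglyTame.isTame (hf : IsStronglyTame α f) (hα : ∀ i, 0 < α i) : IsTame f := by
  obtain ⟨c, hc, hf⟩ := hf.exists_eventually_le_gradNormSq_weightedDilation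
  obtain ⟨T, hT⟩ := eventually_atTop.1 hf
  have polar_image_compact : IsCompact
      ((fun q : ℝ × (σ → 𝕜) => weightedDilation α (q.1 : 𝕜) q.2) '' (Icc 0 T ×ˢ sphere 0 1)) :=
    (isCompact_Icc.prod (isCompact_sphere _ _)).image <|
      (continuous_weightedDilation α).comp (RCLike.continuous_ofReal.prodMap continuous_id)
  refine ⟨c, hc, ?_⟩
  filter_upwards [polar_image_compact.compl_mem_cocompact,
    (isCompact_singleton (x := (0 : σ → 𝕜))).compl_mem_cocompact] with x hx hx₀
  obtain ⟨r, hr, y, hy, rfl⟩ := exists_weightedDilation_eq hα hx₀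
  rw [← mem_sphere_zero_iff_norm] at hy
  refine hT r (le_of_lt ?_) y hy
  by_contra! hrT
  exact hx ⟨(r, y), ⟨⟨hr.le, hrT⟩, hy⟩, rfl⟩

end StronglyTame

section NormalizedGradient

variable {𝕜 σ : Type*} [RCLike 𝕜] [Fintype σ]

lemma contDiff_eval (p : MvPolynomial σ 𝕜) : ContDiff ℝ 1 fun x : σ → 𝕜 => eval x p :=
  ((AnalyticOnNhd.eval_mvPolynomial p).contDiff (n := 1)).restrict_scalars ℝ

lemma contDiff_gradNormSq (f : MvPolynomial σ 𝕜) : ContDiff ℝ 1 (gradNormSq f) :=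
  ContDiff.sum fun i _ => (contDiff_eval (pderiv i f)).norm_sq ℝ

/-- The conjugate gradient of `f` divided by its squared norm, so that `f` has unit derivative along
it. Truncating the denominator below at `c` keeps the field defined and locally Lipschitz
everywhere. -/
noncomputable def normalizedGradient (f : MvPolynomial σ 𝕜) (c : ℝ) (x : σ → 𝕜) : σ → 𝕜 :=
  (max c (gradNormSq f x))⁻¹ • fun i => conj (eval x (pderiv i f))

variable {f : MvPolynomial σ 𝕜} {c : ℝ}

lemma norm_normalizedGradient_le (hc : 0 < c) (x : σ → 𝕜) :
    ‖normalizedGradient f c x‖ ≤ c⁻¹ + 1 := by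
  have hmax : 0 < max c (gradNormSq f x) := lt_max_of_lt_left hc
  have gradient_bound (i : σ) : ‖eval x (pderiv i f)‖ ≤ 1 + gradNormSq f x := by
    have := Finset.single_le_sum (f := fun i => ‖eval x (pderiv i f)‖ ^ 2)
      (fun _ _ => sq_nonneg _) (Finset.mem_univ i)
    rw [gradNormSq]
    nlinarith [sq_nonneg (‖eval x (pderiv i f)‖ - 1)]
  rw [pi_norm_le_iff_of_nonneg (by positivity)]
  intro i
  calc ‖normalizedGradient f c x i‖
      = (max c (gradNormSq f x))⁻¹ * ‖eval x (pderiv i f)‖ := by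
        rw [normalizedGradient, Pi.smul_apply, norm_smul, norm_inv, Real.norm_of_nonneg hmax.le,
          RCLike.norm_conj]
    _ ≤ (max c (gradNormSq f x))⁻¹ * (1 + max c (gradNormSq f x)) := by
        gcongr
        exact (gradient_bound i).trans (by gcongr; exact le_max_right _ _)
    _ = (max c (gradNormSq f x))⁻¹ + 1 := by field_simp
    _ ≤ c⁻¹ + 1 := by
        gcongr
        exact le_max_left _ _

lemma locallyLipschitz_normalizedGradient (hc : 0 < c) :
    LocallyLipschitz (normalizedGradient f c) := by
  have denominator := (contDiff_gradNormSq f).locallyLipschitz.const_max c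
  have numerator : ContDiff ℝ 1 fun x : σ → 𝕜 => fun i => conj (eval x (pderiv i f)) :=
    contDiff_pi.2 fun i => (RCLike.conjCLE (K := 𝕜)).contDiff.comp (contDiff_eval (pderiv i f))
  exact locallyLipschitz_comp_of_contDiffAt (G := fun p : ℝ × (σ → 𝕜) => p.1⁻¹ • p.2)
    (denominator.prodMk numerator.locallyLipschitz) fun x =>
      (contDiffAt_fst.inv (lt_max_of_lt_left hc).ne').smul contDiffAt_snd

lemma exists_lipschitzOnWith_normalizedGradient (hc : 0 < c) (R : ℝ) :
    ∃ K : ℝ≥0, LipschitzOnWith K (normalizedGradient f c) (closedBall 0 R) :=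
  (locallyLipschitz_normalizedGradient hc).locallyLipschitzOn.exists_lipschitzOnWith_of_compact
    (isCompact_closedBall _ _)

lemma hasFDerivAt_eval {K : Type*} [NontriviallyNormedField K] (p : MvPolynomial σ K) (x : σ → K) :
    HasFDerivAt (fun y => eval y p)
      (∑ i, eval x (pderiv i p) • (ContinuousLinearMap.proj i : (σ → K) →L[K] K)) x := by
  classical
  induction p using MvPolynomial.induction_on with
  | C a =>
    simp only [eval_C]
    refine (hasFDerivAt_const (𝕜 := K) a x).congr_fderiv (ContinuousLinearMap.ext fun v => ?_)
    simp
  | add p q hp hq =>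
    simp only [map_add]
    refine (hp.fun_add hq).congr_fderiv (ContinuousLinearMap.ext fun v => ?_)
    simp [add_mul, Finset.sum_add_distrib]
  | mul_X p i hp =>
    simp only [map_mul, eval_X]
    refine (hp.mul (hasFDerivAt_apply i x)).congr_fderiv (ContinuousLinearMap.ext fun v => ?_)
    simp [pderiv_X, Pi.single_apply, add_mul, Finset.sum_add_distrib, Finset.mul_sum, mul_assoc,
      apply_ite, ite_mul]

lemma sum_eval_pderiv_mul_smul_normalizedGradient (w : 𝕜) (x : σ → 𝕜) :
    ∑ i, eval x (pderiv i f) * (w • normalizedGradient f c) x i =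
      (gradNormSq f x / max c (gradNormSq f x)) • w := by
  have summand (i : σ) : eval x (pderiv i f) * (w • normalizedGradient f c) x i =
      (‖eval x (pderiv i f)‖ ^ 2 / max c (gradNormSq f x)) • w := by
    simp only [normalizedGradient, Pi.smul_apply, smul_eq_mul, RCLike.real_smul_eq_coe_mul,
      RCLike.ofReal_div, RCLike.ofReal_pow, RCLike.ofReal_inv, ← RCLike.mul_conj]
    ring
  simp only [summand, ← Finset.sum_smul, ← Finset.sum_div]
  rfl

lemma hasDerivWithinAt_eval_of_isIntegralCurveOn {w : 𝕜} {γ : ℝ → σ → 𝕜} {s : Set ℝ} {t : ℝ}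
    (hγ : IsIntegralCurveOn γ (fun _ => w • normalizedGradient f c) s) (ht : t ∈ s) :
    HasDerivWithinAt (fun t => eval (γ t) f)
      ((gradNormSq f (γ t) / max c (gradNormSq f (γ t))) • w) s t := by
  have h := ((hasFDerivAt_eval f (γ t)).restrictScalars ℝ).comp_hasDerivWithinAt t (hγ t ht)
  rw [← sum_eval_pderiv_mul_smul_normalizedGradient]
  simpa only [Function.comp_def, ContinuousLinearMap.coe_restrictScalars', sum_apply,
    smul_apply, ContinuousLinearMap.proj_apply, smul_eq_mul] using h

lemma eval_apply_one_of_isIntegralCurveOn (hc : 0 < c) {b w : 𝕜} {δ : ℝ}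
    (hf : ∀ x, ‖eval x f - b‖ < δ → c ≤ gradNormSq f x) {γ : ℝ → σ → 𝕜}
    (hγ : IsIntegralCurveOn γ (fun _ => w • normalizedGradient f c) (Icc 0 1))
    (hw : ‖eval (γ 0) f - b‖ + ‖w‖ < δ) : eval (γ 1) f = eval (γ 0) f + w := by
  have max_pos (x : σ → 𝕜) : 0 < max c (gradNormSq f x) := lt_max_of_lt_left hc
  refine apply_one_eq_add_of_hasDerivWithinAt_smul (h := fun t => eval (γ t) f) (b := b) (δ := δ)
    (fun t ht => hasDerivWithinAt_eval_of_isIntegralCurveOn hγ ht) (fun t => ?_) (fun t ht => ?_) hw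
  · rw [abs_of_nonneg (div_nonneg (gradNormSq_nonneg f _) (max_pos _).le)]
    exact div_le_one_of_le₀ (le_max_right _ _) (max_pos _).le
  · rw [max_eq_right (hf _ ht), div_self (hc.trans_le (hf _ ht)).ne']

end NormalizedGradient

section Fibration

variable {𝕜 σ : Type*} [RCLike 𝕜] {f : MvPolynomial σ 𝕜}

lemma IsTame.exists_isOpen_homeomorph [Fintype σ] (hf : IsTame f) {b : 𝕜}
    (hb : b ∉ criticalValues f) :
    ∃ U : Set 𝕜, IsOpen U ∧ b ∈ U ∧ (∀ c ∈ U, c ∉ criticalValues f) ∧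
      ∃ φ : {x : σ → 𝕜 // eval x f ∈ U} ≃ₜ U × {x : σ → 𝕜 // eval x f = b},
        ∀ x, ((φ x).1 : 𝕜) = eval (x : σ → 𝕜) f := by
  obtain ⟨δ, hδ, c, hc, hgrad⟩ := hf.exists_forall_le_gradNormSq_of_norm_sub_lt hb
  have hB := norm_normalizedGradient_le (f := f) hc
  have hL := exists_lipschitzOnWith_normalizedGradient (f := f) hc
  obtain ⟨γ, hγ⟩ := exists_isScaledFlow 𝕜 hB hL
  have hbU : b ∈ ball b (δ / 3) := mem_ball_self (by positivity)
  have transport (w : 𝕜) (x : σ → 𝕜) (hx : eval x f ∈ ball b (δ / 3))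
      (hxw : eval x f + w ∈ ball b (δ / 3)) : eval (γ w x 1) f = eval x f + w := by
    rw [mem_ball_iff_norm] at hx hxw
    have hw : ‖w‖ ≤ ‖eval x f + w - b‖ + ‖eval x f - b‖ := by
      simpa using norm_sub_le (eval x f + w - b) (eval x f - b)
    simpa only [hγ.apply_zero] using eval_apply_one_of_isIntegralCurveOn hc hgrad
      (hγ.isIntegralCurveOn w x) (by rw [hγ.apply_zero]; linarith)
  refine ⟨ball b (δ / 3), isOpen_ball, hbU, ?_, homeomorphOfTransport (continuous_eval f)
    (Φ := fun p => γ p.1 p.2 1) (hγ.continuous_apply_one hB hL) (hγ.neg_apply_one hB hL) hbU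
    transport, fun _ => rfl⟩
  rintro _ hx ⟨x, hcrit, rfl⟩
  have := hgrad x ((mem_ball_iff_norm.1 hx).trans (by linarith))
  linarith [gradNormSq_eq_zero_iff.2 hcrit]

theorem strongly_tame_is_fiber_bundle_general [Finite σ] {α : σ → ℕ} (hα : ∀ i, 0 < α i)
    (hf : IsStronglyTame α f) {b : 𝕜} (hb : b ∉ criticalValues f) :
    ∃ U : Set 𝕜, IsOpen U ∧ b ∈ U ∧ (∀ c ∈ U, c ∉ criticalValues f) ∧
      ∃ φ : {x : σ → 𝕜 // eval x f ∈ U} ≃ₜ U × {x : σ → 𝕜 // eval x f = b},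
        ∀ x, ((φ x).1 : 𝕜) = eval (x : σ → 𝕜) f :=
  have := Fintype.ofFinite σ
  (hf.isTame hα).exists_isOpen_homeomorph hb

end Fibration

/-- A strongly tame polynomial `f` is a topologically locally trivial
fibration over `ℂ ∖ C`, where `C = f(Sing(f))` is the set of critical values: for every
`b ∉ C` there is an open neighborhood `U ⊆ ℂ ∖ C` of `b` and a homeomorphism
`φ : f⁻¹(U) ≃ₜ U × f⁻¹(b)` whose first component is the restriction of `f`. -/
theorem strongly_tame_is_fiber_bundle
    (n : ℕ) (hn : 1 ≤ n) (α : Fin (n + 1) → ℕ)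
    (hαpos : ∀ i, 0 < α i) (hα : Finset.univ.gcd α = 1)
    (f : MvPolynomial (Fin (n + 1)) ℂ) (d : ℕ)
    (hd : MvPolynomial.weightedTotalDegree α f = d)
    (g : MvPolynomial (Fin (n + 1)) ℂ)
    (hg : g = weightedHomogeneousComponent α d f)
    (hg0 : g ≠ 0)
    (htame : ∀ x : Fin (n + 1) → ℂ, (∀ i, eval x (pderiv i g) = 0) → x = 0)
    (b : ℂ)
    (hb : b ∉ (fun x => eval x f) '' {x : Fin (n + 1) → ℂ | ∀ i, eval x (pderiv i f) = 0}) :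
    ∃ U : Set ℂ, IsOpen U ∧ b ∈ U ∧
      (∀ c ∈ U, c ∉ (fun x => eval x f) ''
        {x : Fin (n + 1) → ℂ | ∀ i, eval x (pderiv i f) = 0}) ∧
      ∃ φ : {x : Fin (n + 1) → ℂ // eval x f ∈ U} ≃ₜ
            U × {x : Fin (n + 1) → ℂ // eval x f = b},
        ∀ x, ((φ x).1 : ℂ) = eval (x : Fin (n + 1) → ℂ) f := by
  subst hd hg
  exact strongly_tame_is_fiber_bundle_general hαpos htame hb
end

section
/- Let f ∈ ℂ[x₁,…,x_{n+1}] be a strongly tame polynomial of weighted degree d, F ∈ ℂ[x₀,x₁,…,x_{n+1}] its homogenization, and let the monomials x^β, β ∈ I, be a ℂ-basis of the Milnor algebra V_g of the last quasi-homogeneous part g of f. Then the images of x^β, β ∈ I, form a basis of the ℂ[x₀]-module V := ℂ[x₀,x]/⟨∂F/∂x₁,…,∂F/∂x_{n+1}⟩; in particular this module is free of rank #I over ℂ[x₀]. -/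
open MvPolynomial

noncomputable section

/-- The homogenization `F = Σ_{i=0}^d fᵢ·x₀^{d-i}` of `f`, where `fᵢ` is the weighted
homogeneous component of degree `i` of `f`; the variable `x₀` is the new variable `0`
of `Fin (n+2)` and `xᵢ` becomes the variable `Fin.succ i`. -/
def homogenization (n d : ℕ) (α : Fin (n + 1) → ℕ)
    (f : MvPolynomial (Fin (n + 1)) ℂ) : MvPolynomial (Fin (n + 2)) ℂ :=
  ∑ i ∈ Finset.range (d + 1),
    rename Fin.succ (weightedHomogeneousComponent α i f) * X 0 ^ (d - i)

/-- The ideal generated by the partial derivatives of `F` with respect to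
`x₁, …, x_{n+1}` only (not `x₀`). -/
def partialIdeal (n d : ℕ) (α : Fin (n + 1) → ℕ)
    (f : MvPolynomial (Fin (n + 1)) ℂ) : Ideal (MvPolynomial (Fin (n + 2)) ℂ) :=
  Ideal.span (Set.range fun i : Fin (n + 1) => pderiv i.succ (homogenization n d α f))

/-- The module `V = ℂ[x₀,x]/⟨∂F/∂x₁,…,∂F/∂x_{n+1}⟩`. -/
abbrev Vmod (n d : ℕ) (α : Fin (n + 1) → ℕ) (f : MvPolynomial (Fin (n + 1)) ℂ) :=
  MvPolynomial (Fin (n + 2)) ℂ ⧸ partialIdeal n d α f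

/-- `V` as a module over `ℂ[x₀]`, where `x₀` acts as multiplication by the class of the
variable `X 0`. -/
instance (n d : ℕ) (α : Fin (n + 1) → ℕ) (f : MvPolynomial (Fin (n + 1)) ℂ) :
    Module (Polynomial ℂ) (Vmod n d α f) :=
  Module.compHom _
    ((Polynomial.aeval (Ideal.Quotient.mk (partialIdeal n d α f) (X 0))).toRingHom)

/-!
Since the partial derivatives of `g` vanish simultaneously only at the origin, the Nullstellensatz
puts powers `xᵢ ^ mᵢ` of all the variables into the ideal they generate. As `F` becomes `g` at
`x₀ = 0`, the entries of the regular sequence `x₀, x₁ ^ m₁, …, x_{n+1} ^ m_{n+1}` lie in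
`(∂F/∂x₁, …, ∂F/∂x_{n+1}) + (x₀)`. Descending along this sequence, the Koszul complex of the
`∂F/∂xᵢ` becomes exact in degree one modulo `x₀`. If `x₀ h = ∑ vᵢ ∂F/∂xᵢ`, then `v` is a Koszul
cycle modulo `x₀`, hence a boundary plus `x₀ b`, and `h = ∑ bᵢ ∂F/∂xᵢ`: multiplication by `x₀` is
injective on `V`.

Now `V / x₀ V = V_g`. A relation over `ℂ[x₀]` between lifts of a basis of `V_g` has all its
coefficients divisible by `x₀`, and cancelling `x₀` repeatedly shows that it is trivial. The lifts
generate `V` by the graded Nakayama lemma, because `x₀` has positive weight.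
-/

section Koszul

open RingTheory.Sequence

variable {R M : Type*} [CommRing R] [AddCommGroup M] [Module R M]

/-- The differential of the Koszul complex of a linear form `D : M → R`, as the contraction with `D`
on the whole exterior algebra of `M`. -/
def koszulDifferential (D : Module.Dual R M) : ExteriorAlgebra R M →ₗ[R] ExteriorAlgebra R M :=
  CliffordAlgebra.contractLeft (Q := (0 : QuadraticForm R M)) D

theorem koszulDifferential_ι (D : Module.Dual R M) (v : M) :
    koszulDifferential D (ExteriorAlgebra.ι R v) = algebraMap R _ (D v) :=
  CliffordAlgebra.contractLeft_ι 0 D v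

theorem koszulDifferential_ι_mul (D : Module.Dual R M) (v : M) (x : ExteriorAlgebra R M) :
    koszulDifferential D (ExteriorAlgebra.ι R v * x) =
      D v • x - ExteriorAlgebra.ι R v * koszulDifferential D x :=
  CliffordAlgebra.contractLeft_ι_mul (Q := 0) (d := D) v x

theorem koszulDifferential_koszulDifferential (D : Module.Dual R M) (x : ExteriorAlgebra R M) :
    koszulDifferential D (koszulDifferential D x) = 0 :=
  CliffordAlgebra.contractLeft_contractLeft D x

theorem ι_mul_mem_exteriorPower (v : M) {k : ℕ} {x : ExteriorAlgebra R M} (hx : x ∈ ⋀[R]^k M) :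
    ExteriorAlgebra.ι R v * x ∈ ⋀[R]^(k + 1) M := by
  rw [ExteriorAlgebra.exteriorPower, pow_succ']
  exact Submodule.mul_mem_mul (LinearMap.mem_range_self _ v) hx

theorem koszulDifferential_mem_exteriorPower (D : Module.Dual R M) {k : ℕ}
    {x : ExteriorAlgebra R M} (hx : x ∈ ⋀[R]^(k + 1) M) :
    koszulDifferential D x ∈ ⋀[R]^k M := by
  induction k generalizing x with
  | zero =>
    rw [ExteriorAlgebra.exteriorPower, zero_add, pow_one] at hx
    obtain ⟨v, rfl⟩ := hx
    rw [koszulDifferential_ι, ExteriorAlgebra.exteriorPower, pow_zero]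
    exact Submodule.algebraMap_mem _
  | succ k ih =>
    rw [ExteriorAlgebra.exteriorPower, pow_succ'] at hx
    induction hx using Submodule.mul_induction_on' with
    | mem_mul_mem u hu y hy =>
      obtain ⟨v, rfl⟩ := hu
      rw [koszulDifferential_ι_mul]
      exact sub_mem (Submodule.smul_mem _ _ hy) (ι_mul_mem_exteriorPower v (ih hy))
    | add y _ z _ hy hz =>
      rw [map_add]
      exact add_mem hy hz

theorem map_mem_ideal_smul {N : Type*} [AddCommGroup N] [Module R N] {Q : Ideal R}
    {L : Submodule R M} {L' : Submodule R N} {T : M →ₗ[R] N} (hT : L ≤ L'.comap T) {x : M}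
    (hx : x ∈ Q • L) : T x ∈ Q • L' := by
  have hmap : T x ∈ Q • L.map T := Submodule.map_smul'' Q L T ▸ Submodule.mem_map_of_mem hx
  exact Submodule.smul_mono le_rfl (Submodule.map_le_iff_le_comap.2 hT) hmap

theorem mem_ideal_smul_of_smul_mem {L : Submodule R M} [Module.Flat R L] {Q : Ideal R} {a : R}
    (ha : IsSMulRegular (R ⧸ Q) a) {x : M} (hxL : x ∈ L) (hx : a • x ∈ Q • L) : x ∈ Q • L := by
  have hreg : IsSMulRegular (L ⧸ Q • (⊤ : Submodule R L)) a :=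
    (LinearEquiv.isSMulRegular_congr (TensorProduct.tensorQuotEquivQuotSMul L Q) a).1
      (IsSMulRegular.lTensor L ha)
  have hmem := (isSMulRegular_quotient_iff_mem_of_smul_mem _ a).1 hreg ⟨x, hxL⟩
  rw [Submodule.mem_smul_top_iff, Submodule.mem_smul_top_iff] at hmem
  exact hmem hx

/-- Exactness modulo `Q` of the Koszul complex of `D` in degree `k + 1`: every cycle modulo `Q` is a
boundary modulo `Q`. -/
def KoszulExactMod (D : Module.Dual R M) (Q : Ideal R) (k : ℕ) : Prop :=
  ∀ z ∈ ⋀[R]^(k + 1) M, koszulDifferential D z ∈ Q • ⋀[R]^k M →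
    ∃ w ∈ ⋀[R]^(k + 2) M, z - koszulDifferential D w ∈ Q • ⋀[R]^(k + 1) M

/- Write `a ≡ D v` modulo `Q`. Then `v ∧ z` is a cycle modulo `Q ⊔ (a)`, since
`d (v ∧ z) = D v • z - v ∧ d z`. Writing it as `d w + q + a • u` with `q` zero modulo `Q` and
applying `d` gives `a • d u ≡ a • z` modulo `Q`, where `a` can be cancelled. -/
theorem KoszulExactMod.of_sup_span_singleton [Module.Free R M] {D : Module.Dual R M} {Q : Ideal R}
    {a : R} (hreg : IsSMulRegular (R ⧸ Q) a) (haD : a ∈ LinearMap.range D ⊔ Q) {k : ℕ}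
    (hexact : KoszulExactMod D (Q ⊔ Ideal.span {a}) (k + 1)) : KoszulExactMod D Q k := by
  intro z hz hdz
  obtain ⟨_, ⟨v, rfl⟩, b, hb, rfl⟩ := Submodule.mem_sup.1 haD
  have hvdz : ExteriorAlgebra.ι R v * koszulDifferential D z ∈ Q • ⋀[R]^(k + 1) M :=
    map_mem_ideal_smul (T := LinearMap.mulLeft R (ExteriorAlgebra.ι R v))
      (fun _ => ι_mul_mem_exteriorPower v) hdz
  have hbz : b • z ∈ Q • ⋀[R]^(k + 1) M := Submodule.smul_mem_smul hb hz
  have hcycle : koszulDifferential D (ExteriorAlgebra.ι R v * z) ∈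
      (Q ⊔ Ideal.span {D v + b}) • ⋀[R]^(k + 1) M := by
    rw [koszulDifferential_ι_mul, ← add_sub_cancel_right (D v • z) (b • z), ← add_smul]
    refine sub_mem (sub_mem ?_ (Submodule.smul_mono_left le_sup_left hbz))
      (Submodule.smul_mono_left le_sup_left hvdz)
    exact Submodule.smul_mem_smul (Ideal.mem_sup_right (Ideal.mem_span_singleton_self _)) hz
  obtain ⟨w, -, hw⟩ := hexact _ (ι_mul_mem_exteriorPower v hz) hcycle
  rw [Submodule.sup_smul, Submodule.ideal_span_singleton_smul, Submodule.mem_sup] at hw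
  obtain ⟨q, hq, _, ⟨u, hu, rfl⟩, hw⟩ := hw
  have hdq : koszulDifferential D q ∈ Q • ⋀[R]^(k + 1) M :=
    map_mem_ideal_smul (fun _ => koszulDifferential_mem_exteriorPower D) hq
  have hdw : koszulDifferential D q + (D v + b) • koszulDifferential D u =
      D v • z - ExteriorAlgebra.ι R v * koszulDifferential D z := by
    have := congrArg (koszulDifferential D) hw
    rwa [map_add, map_sub, koszulDifferential_koszulDifferential, sub_zero,
      koszulDifferential_ι_mul, DistribSMul.toLinearMap_apply, map_smul] at this
  have hcancel : (D v + b) • (z - koszulDifferential D u) = koszulDifferential D q +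
      ExteriorAlgebra.ι R v * koszulDifferential D z + b • z := by
    rw [smul_sub, eq_sub_of_add_eq' hdw, add_smul]
    abel
  refine ⟨u, hu, mem_ideal_smul_of_smul_mem hreg
    (sub_mem hz (koszulDifferential_mem_exteriorPower D hu)) ?_⟩
  rw [hcancel]
  exact add_mem (add_mem hdq hvdz) hbz

theorem isWeaklyRegular_self_iff {rs : List R} :
    IsWeaklyRegular R rs ↔ ∀ (i : ℕ) (hi : i < rs.length) (r : R),
      rs[i] * r ∈ Ideal.ofList (rs.take i) → r ∈ Ideal.ofList (rs.take i) := by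
  simp only [isWeaklyRegular_iff, isSMulRegular_quotient_iff_mem_of_smul_mem, smul_eq_mul,
    Ideal.mul_top]

theorem koszulExactMod_ofList [Nontrivial R] [Module.Free R M] [Module.Finite R M]
    {D : Module.Dual R M} {qs as : List R} {k : ℕ} (hreg : IsWeaklyRegular R (qs ++ as))
    (has : ∀ a ∈ as, a ∈ LinearMap.range D ⊔ Ideal.ofList qs)
    (hrank : Module.finrank R M ≤ as.length + k) : KoszulExactMod D (Ideal.ofList qs) k := by
  induction as generalizing qs k with
  | nil =>
    intro z hz _
    have hzero : Module.finrank R (⋀[R]^(k + 1) M) = 0 := by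
      rw [exteriorPower.finrank_eq, Nat.choose_eq_zero_iff]
      simpa [Nat.lt_succ_iff] using hrank
    have := (Module.finrank_eq_zero_iff_of_free R _).1 hzero
    obtain rfl : z = 0 := congrArg Subtype.val (Subsingleton.elim (⟨z, hz⟩ : ⋀[R]^(k + 1) M) 0)
    exact ⟨0, zero_mem _, by simp⟩
  | cons a as ih =>
    have hQ : Ideal.ofList (qs ++ [a]) = Ideal.ofList qs ⊔ Ideal.span {a} := by
      rw [Ideal.ofList_append, Ideal.ofList_singleton]
    refine .of_sup_span_singleton (a := a) ?_ (has a List.mem_cons_self) ?_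
    · refine (isSMulRegular_quotient_iff_mem_of_smul_mem _ a).2 fun r hr => ?_
      have := isWeaklyRegular_self_iff.1 hreg qs.length (by simp) r
      rw [List.take_left, List.getElem_append_right le_rfl] at this
      simp only [Nat.sub_self, List.getElem_cons_zero] at this
      exact this hr
    · rw [← hQ]
      refine ih (by simpa using hreg) (fun c hc => ?_) (by simp at hrank; omega)
      rw [hQ, ← sup_assoc]
      exact Submodule.mem_sup_left (has c (List.mem_cons_of_mem a hc))

theorem isSMulRegular_quotient_span_range {ι : Type*} [Fintype ι] {g : ι → R} {x : R}
    {as : List R} (hreg : IsWeaklyRegular R (x :: as)) (hcard : Fintype.card ι ≤ as.length)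
    (has : ∀ a ∈ as, a ∈ Ideal.span (Set.range g) ⊔ Ideal.span {x}) :
    IsSMulRegular (R ⧸ Ideal.span (Set.range g)) x := by
  cases subsingleton_or_nontrivial R
  · exact Function.injective_of_subsingleton _
  set D : Module.Dual R (ι → R) := Fintype.linearCombination R g
  have hrange : LinearMap.range D = Ideal.span (Set.range g) := Fintype.range_linearCombination R g
  have hxreg : IsSMulRegular R x := ((isWeaklyRegular_cons_iff R x as).1 hreg).1
  have hexact : KoszulExactMod D (Ideal.ofList [x]) 0 := by
    refine koszulExactMod_ofList hreg ?_ ?_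
    · rwa [hrange, Ideal.ofList_singleton]
    · rwa [Module.finrank_fintype_fun_eq_card]
  rw [Ideal.ofList_singleton] at hexact
  refine (isSMulRegular_quotient_iff_mem_of_smul_mem _ x).2 fun h hh => ?_
  rw [← hrange] at hh ⊢
  obtain ⟨v, hv⟩ := hh
  have hdv : koszulDifferential D (ExteriorAlgebra.ι R v) = x • algebraMap R _ h := by
    rw [koszulDifferential_ι, hv, smul_eq_mul, map_mul, ← Algebra.smul_def]
  obtain ⟨w, -, hw⟩ := hexact (ExteriorAlgebra.ι R v) (by simp [ExteriorAlgebra.exteriorPower]) (by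
    rw [hdv, ExteriorAlgebra.exteriorPower, pow_zero]
    exact Submodule.smul_mem_smul (Ideal.mem_span_singleton_self x) (Submodule.algebraMap_mem h))
  rw [Submodule.ideal_span_singleton_smul, zero_add, ExteriorAlgebra.exteriorPower, pow_one] at hw
  obtain ⟨_, ⟨b, rfl⟩, hb⟩ := hw
  refine ⟨b, hxreg ((ExteriorAlgebra.algebraMap_inj (ι → R) _ _).1 ?_)⟩
  have hdb := congrArg (koszulDifferential D) hb
  rw [DistribSMul.toLinearMap_apply, map_smul, map_sub, koszulDifferential_koszulDifferential,
    sub_zero, hdv, koszulDifferential_ι] at hdb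
  simpa only [smul_eq_mul, map_mul, Algebra.smul_def] using hdb

end Koszul

section MvPolynomial

open RingTheory.Sequence

variable {R : Type*} [CommRing R]

theorem X_pow_mul_mem_ideal_span {σ : Type*} {s : Set σ} {i : σ} (hi : i ∉ s) (e : σ → ℕ)
    {p : MvPolynomial σ R}
    (hp : X i ^ e i * p ∈ Ideal.span ((fun j => (X j : MvPolynomial σ R) ^ e j) '' s)) :
    p ∈ Ideal.span ((fun j => (X j : MvPolynomial σ R) ^ e j) '' s) := by
  have himage : (fun j => (X j : MvPolynomial σ R) ^ e j) '' s =
      (fun m => monomial m (1 : R)) '' ((fun j => Finsupp.single j (e j)) '' s) := by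
    simp only [Set.image_image, X_pow_eq_monomial]
  rw [himage, mem_ideal_span_monomial_image] at hp ⊢
  intro m hm
  obtain ⟨_, ⟨j, hj, rfl⟩, hle⟩ := hp (Finsupp.single i (e i) + m) <| by
    rwa [mem_support_iff, X_pow_eq_monomial, coeff_monomial_mul, one_mul, ← mem_support_iff]
  refine ⟨_, ⟨j, hj, rfl⟩, ?_⟩
  rw [Finsupp.single_le_iff] at hle ⊢
  rwa [Finsupp.add_apply, Finsupp.single_eq_of_ne (ne_of_mem_of_not_mem hj hi), zero_add] at hle

theorem isWeaklyRegular_X_pow {σ : Type*} {l : List σ} (hl : l.Nodup) (e : σ → ℕ) :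
    IsWeaklyRegular (MvPolynomial σ R) (l.map fun i => (X i : MvPolynomial σ R) ^ e i) := by
  refine isWeaklyRegular_self_iff.2 fun k hk p hp => ?_
  rw [List.length_map] at hk
  have hspan : Ideal.ofList ((l.map fun i => (X i : MvPolynomial σ R) ^ e i).take k) =
      Ideal.span ((fun i => X i ^ e i) '' {i | i ∈ l.take k}) := by
    rw [Ideal.ofList, ← List.map_take]
    exact congrArg Ideal.span (Set.ext fun _ => List.mem_map)
  have hnotMem : l[k] ∉ {i | i ∈ l.take k} := by
    intro hmem
    obtain ⟨j, hj, hjk⟩ := List.mem_take_iff_getElem.1 hmem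
    have := hl.getElem_inj_iff.1 hjk
    omega
  rw [hspan, List.getElem_map] at hp
  rw [hspan]
  exact X_pow_mul_mem_ideal_span hnotMem e hp

theorem exists_X_pow_mem_of_forall_eval_eq_zero {K σ : Type*} [Field K] [IsAlgClosed K] [Finite σ]
    {I : Ideal (MvPolynomial σ K)} (hI : ∀ x : σ → K, (∀ p ∈ I, eval x p = 0) → x = 0) (i : σ) :
    ∃ m, X i ^ m ∈ I := by
  suffices X i ∈ I.radical from this
  rw [← vanishingIdeal_zeroLocus_eq_radical (K := K), mem_vanishingIdeal_iff]
  intro x hx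
  simp only [mem_zeroLocus_iff, aeval_eq_eval] at hx
  simp [hI x hx]

/-- The substitution `x₀ = 0`; the remaining variables `x₁, …, xₙ` are renumbered from `0`. -/
def specializeX0 (R : Type*) [CommRing R] (n : ℕ) :
    MvPolynomial (Fin (n + 1)) R →ₐ[R] MvPolynomial (Fin n) R :=
  aeval (Fin.cons 0 X)

variable {n : ℕ}

theorem specializeX0_X_zero : specializeX0 R n (X 0) = 0 := by
  simp [specializeX0]

theorem specializeX0_rename_succ (p : MvPolynomial (Fin n) R) :
    specializeX0 R n (rename Fin.succ p) = p := by
  have hcons : (Fin.cons 0 X : Fin (n + 1) → MvPolynomial (Fin n) R) ∘ Fin.succ = X :=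
    funext fun i => Fin.cons_succ _ _ i
  rw [specializeX0, aeval_rename, hcons, aeval_X_left_apply]

theorem specializeX0_surjective : Function.Surjective (specializeX0 R n) :=
  fun p => ⟨rename Fin.succ p, specializeX0_rename_succ p⟩

theorem ker_specializeX0 : RingHom.ker (specializeX0 R n) = Ideal.span {X 0} := by
  have hretract : ((Ideal.Quotient.mkₐ R (Ideal.span {X 0})).comp (rename Fin.succ)).comp
      (specializeX0 R n) = Ideal.Quotient.mkₐ R (Ideal.span {X 0}) := by
    refine algHom_ext fun i => Fin.cases ?_ (fun j => ?_) i
    · rw [AlgHom.comp_apply, specializeX0_X_zero, map_zero, Ideal.Quotient.mkₐ_eq_mk, eq_comm,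
        Ideal.Quotient.eq_zero_iff_mem]
      exact Ideal.mem_span_singleton_self _
    · simp [specializeX0]
  refine le_antisymm (fun p hp => ?_) ?_
  · rw [← Ideal.Quotient.eq_zero_iff_mem, ← Ideal.Quotient.mkₐ_eq_mk R, ← hretract,
      AlgHom.comp_apply, RingHom.mem_ker.1 hp, map_zero]
  · rw [Ideal.span_singleton_le_iff_mem, RingHom.mem_ker, specializeX0_X_zero]

theorem comap_specializeX0_map (I : Ideal (MvPolynomial (Fin (n + 1)) R)) :
    (I.map (specializeX0 R n)).comap (specializeX0 R n) = I ⊔ Ideal.span {X 0} := by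
  rw [Ideal.comap_map_of_surjective' _ specializeX0_surjective, ker_specializeX0]

theorem exists_eq_add_add_X_zero_mul {I : Ideal (MvPolynomial (Fin (n + 1)) R)} {ι : Type*}
    {b : ι → MvPolynomial (Fin n) R}
    (hspan : Submodule.span R (Set.range fun j =>
      Ideal.Quotient.mk (I.map (specializeX0 R n)) (b j)) = ⊤)
    (p : MvPolynomial (Fin (n + 1)) R) :
    ∃ h ∈ Submodule.span R (Set.range fun j => rename Fin.succ (b j)), ∃ r ∈ I, ∃ c,
      p = h + r + X 0 * c := by
  let mk := (Ideal.Quotient.mkₐ R (I.map (specializeX0 R n))).toLinearMap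
  have hmem : mk (specializeX0 R n p) ∈ (Submodule.span R (Set.range b)).map mk := by
    rw [Submodule.map_span, ← Set.range_comp]
    exact hspan ▸ Submodule.mem_top
  obtain ⟨h, hh, hmk⟩ := hmem
  have hdiff : p - rename Fin.succ h ∈ I ⊔ Ideal.span {X 0} := by
    rw [← comap_specializeX0_map, Ideal.mem_comap, map_sub, specializeX0_rename_succ]
    exact Ideal.Quotient.eq.1 hmk.symm
  obtain ⟨r, hr, s, hs, hsum⟩ := Submodule.mem_sup.1 hdiff
  obtain ⟨c, rfl⟩ := Ideal.mem_span_singleton'.1 hs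
  refine ⟨rename Fin.succ h, ?_, r, hr, c, by linear_combination -hsum⟩
  have := Submodule.mem_map_of_mem (f := (rename Fin.succ : _ →ₐ[R] _).toLinearMap) hh
  rwa [Submodule.map_span, ← Set.range_comp] at this

theorem isSMulRegular_X_zero_of_X_pow_mem {G : Fin n → MvPolynomial (Fin (n + 1)) R}
    (hG : ∀ i, ∃ m, X i ^ m ∈ (Ideal.span (Set.range G)).map (specializeX0 R n)) :
    IsSMulRegular (MvPolynomial (Fin (n + 1)) R ⧸ Ideal.span (Set.range G))
      (X 0 : MvPolynomial (Fin (n + 1)) R) := by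
  choose m hm using hG
  let as : List (MvPolynomial (Fin (n + 1)) R) :=
    (List.finRange n).map fun i => X i.succ ^ m i
  have hreg : IsWeaklyRegular (MvPolynomial (Fin (n + 1)) R) (X 0 :: as) := by
    have := isWeaklyRegular_X_pow (R := R) (List.nodup_finRange (n + 1)) (Fin.cons 1 m)
    rw [List.finRange_succ] at this
    simpa [as, Function.comp_def] using this
  refine isSMulRegular_quotient_span_range hreg (by simp [as]) fun a ha => ?_
  obtain ⟨i, -, rfl⟩ := List.mem_map.1 ha
  rw [← comap_specializeX0_map, Ideal.mem_comap, map_pow, ← rename_X, specializeX0_rename_succ]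
  exact hm i

end MvPolynomial

section Graded

open DirectSum

variable {K V ι : Type*} [Semiring K] [AddCommMonoid V] [Module K V] [DecidableEq ι]
  {𝒱 : ι → Submodule K V} [Decomposition 𝒱]

theorem isHomogeneous_span {s : Set V}
    (hs : ∀ v ∈ s, SetLike.IsHomogeneousElem 𝒱 v) :
    SetLike.IsHomogeneous 𝒱 (Submodule.span K s) := by
  intro i v hv
  induction hv using Submodule.span_induction with
  | mem v hv =>
    obtain ⟨j, hj⟩ := hs v hv
    rw [decompose_of_mem 𝒱 hj, coe_of_apply]
    split_ifs
    · exact Submodule.subset_span hv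
    · exact zero_mem _
  | zero => simp
  | add v w _ _ hv hw => simpa only [decompose_add] using! add_mem hv hw
  | smul c v _ hv => simpa only [decompose_smul] using! Submodule.smul_mem _ c hv

theorem isHomogeneous_sup {S T : Submodule K V}
    (hS : SetLike.IsHomogeneous 𝒱 S) (hT : SetLike.IsHomogeneous 𝒱 T) :
    SetLike.IsHomogeneous 𝒱 (S ⊔ T) := by
  intro i v hv
  obtain ⟨s, hs, t, ht, rfl⟩ := Submodule.mem_sup.1 hv
  rw [decompose_add]
  exact Submodule.add_mem_sup (hS i hs) (hT i ht)

theorem graded_nakayama {A σ : Type*} [Semiring A] [SetLike σ A]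
    [AddSubmonoidClass σ A] (𝒜 : ℕ → σ) [GradedRing 𝒜] {x : A} {i : ℕ} (hi : 0 < i) (hx : x ∈ 𝒜 i)
    {H W : AddSubmonoid A} (hH : SetLike.IsHomogeneous 𝒜 H)
    (hsup : ∀ a, ∃ h ∈ H, ∃ b, a = h + x * b) (hHW : H ≤ W) (hxW : ∀ a ∈ W, x * a ∈ W) :
    W = ⊤ := by
  have hcomponent : ∀ n a, (decompose 𝒜 a n : A) ∈ W := by
    intro n
    induction n using Nat.strong_induction_on with
    | _ n ih =>
      intro a
      obtain ⟨h, hh, b, rfl⟩ := hsup a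
      rw [decompose_add, DirectSum.add_apply, AddMemClass.coe_add,
        coe_decompose_mul_of_left_mem 𝒜 n hx]
      refine add_mem (hHW (hH n hh)) ?_
      split_ifs with hin
      · exact hxW _ (ih (n - i) (by omega) b)
      · exact zero_mem W
  classical
  refine (AddSubmonoid.eq_top_iff' W).2 fun a => ?_
  rw [← sum_support_decompose 𝒜 a]
  exact sum_mem fun n _ => hcomponent n a

end Graded

section PolynomialModule

variable {R M : Type*} [CommRing R] [AddCommGroup M] [Module R M] [Module (Polynomial R) M]
  [IsScalarTower R (Polynomial R) M]

theorem map_polynomial_smul {N : Type*} [AddCommGroup N] [Module R N] {π : M →ₗ[R] N}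
    (hπ : ∀ m, π ((Polynomial.X : Polynomial R) • m) = 0) (p : Polynomial R) (m : M) :
    π (p • m) = p.coeff 0 • π m := by
  rw [← p.X_mul_divX_add, add_smul, mul_smul, map_add, hπ, zero_add, ← Polynomial.algebraMap_eq,
    algebraMap_smul, map_smul]
  simp

theorem linearIndependent_polynomial_of_isSMulRegular {N ι : Type*} [AddCommGroup N] [Module R N]
    (hreg : IsSMulRegular M (Polynomial.X : Polynomial R)) {π : M →ₗ[R] N}
    (hπ : ∀ m, π ((Polynomial.X : Polynomial R) • m) = 0) {v : ι → M}
    (hv : LinearIndependent R (π ∘ v)) : LinearIndependent (Polynomial R) v := by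
  rw [linearIndependent_iff'] at hv ⊢
  intro s p hp i hi
  have hcoeff_zero : ∀ p : ι → Polynomial R, ∑ i ∈ s, p i • v i = 0 →
      ∀ i ∈ s, (p i).coeff 0 = 0 := fun p hp => hv s _ <| by
    simpa only [map_sum, map_polynomial_smul hπ, map_zero,
      Function.comp_apply] using congrArg π hp
  ext k
  induction k generalizing p i with
  | zero => exact hcoeff_zero p hp i hi
  | succ k ih =>
    rw [← Polynomial.coeff_divX]
    refine ih (fun i => (p i).divX) (hreg ?_) i hi
    dsimp only
    rw [smul_zero, Finset.smul_sum, ← hp]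
    refine Finset.sum_congr rfl fun j hj => ?_
    rw [← mul_smul]
    congr 1
    simpa [hcoeff_zero p hp j hj] using (p j).X_mul_divX_add

theorem span_polynomial_range_eq_top {A ι : Type*} [Ring A] [Algebra R A] (𝒜 : ℕ → Submodule R A)
    [GradedAlgebra 𝒜] {x : A} {i : ℕ} (hi : 0 < i) (hx : x ∈ 𝒜 i) {q : A →ₗ[R] M}
    (hq : Function.Surjective q) (hqx : ∀ a, q (x * a) = (Polynomial.X : Polynomial R) • q a)
    (hker : DirectSum.SetLike.IsHomogeneous 𝒜 (LinearMap.ker q)) {b : ι → A}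
    (hb : ∀ j, SetLike.IsHomogeneousElem 𝒜 (b j))
    (hsup : ∀ a, ∃ h ∈ Submodule.span R (Set.range b) ⊔ LinearMap.ker q, ∃ c, a = h + x * c) :
    Submodule.span (Polynomial R) (Set.range (q ∘ b)) = ⊤ := by
  set S := Submodule.span (Polynomial R) (Set.range (q ∘ b))
  have hspan : Submodule.span R (Set.range b) ⊔ LinearMap.ker q ≤
      (S.restrictScalars R).comap q := by
    refine sup_le (Submodule.span_le.2 ?_) (LinearMap.ker_le_comap q)
    rintro _ ⟨j, rfl⟩
    exact Submodule.subset_span ⟨j, rfl⟩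
  have htop : ((S.restrictScalars R).comap q).toAddSubmonoid = ⊤ := by
    refine graded_nakayama 𝒜 hi hx
      (H := (Submodule.span R (Set.range b) ⊔ LinearMap.ker q).toAddSubmonoid)
      (isHomogeneous_sup (isHomogeneous_span (Set.forall_mem_range.2 hb)) hker) hsup hspan ?_
    intro a ha
    simpa [hqx] using S.smul_mem Polynomial.X ha
  refine (Submodule.eq_top_iff').2 fun m => ?_
  obtain ⟨a, rfl⟩ := hq m
  exact (htop ▸ AddSubmonoid.mem_top a : a ∈ ((S.restrictScalars R).comap q).toAddSubmonoid)

end PolynomialModule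

section Homogenization

variable {n d : ℕ} {α : Fin (n + 1) → ℕ} {f : MvPolynomial (Fin (n + 1)) ℂ}

/-- The weights `(1, α₁, …, α_{n+1})` of the variables `x₀, x₁, …, x_{n+1}`. -/
abbrev extendedWeight (α : Fin (n + 1) → ℕ) : Fin (n + 2) → ℕ :=
  Fin.cons 1 α

theorem isWeightedHomogeneous_rename_succ {p : MvPolynomial (Fin (n + 1)) ℂ} {k : ℕ}
    (hp : IsWeightedHomogeneous α p k) :
    IsWeightedHomogeneous (extendedWeight α) (rename Fin.succ p) k := by
  intro m hm
  obtain ⟨u, rfl, hu⟩ := coeff_rename_ne_zero _ _ _ hm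
  rw [← hp hu, Finsupp.weight, Finsupp.weight]
  simp only [LinearMap.toAddMonoidHom_coe, Finsupp.linearCombination_mapDomain]
  rfl

theorem isWeightedHomogeneous_homogenization :
    IsWeightedHomogeneous (extendedWeight α) (homogenization n d α f) d := by
  refine (mem_weightedHomogeneousSubmodule ℂ _ _ _).1 (Submodule.sum_mem _ fun i hi => ?_)
  have hX : IsWeightedHomogeneous (extendedWeight α)
      (X 0 ^ (d - i) : MvPolynomial (Fin (n + 2)) ℂ) (d - i) := by
    simpa using (isWeightedHomogeneous_X ℂ (extendedWeight α) 0).pow (d - i)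
  have hprod := (isWeightedHomogeneous_rename_succ
    (weightedHomogeneousComponent_isWeightedHomogeneous (w := α) i f)).mul hX
  rwa [Nat.add_sub_cancel' (Finset.mem_range_succ_iff.1 hi)] at hprod

theorem exists_isWeightedHomogeneous_pderiv {σ R : Type*} [CommSemiring R] {w : σ → ℕ}
    {p : MvPolynomial σ R} {k : ℕ} (hp : IsWeightedHomogeneous w p k) (i : σ) :
    ∃ l, IsWeightedHomogeneous w (pderiv i p) l := by
  by_cases hi : w i ≤ k
  · exact ⟨k - w i, hp.pderiv (Nat.sub_add_cancel hi)⟩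
  · have hvars : i ∉ p.vars := fun hmem => hi <| by
      obtain ⟨m, hm, him⟩ := (mem_vars_iff_mem_support i).1 hmem
      rw [← hp (mem_support_iff.1 hm)]
      exact Finsupp.le_weight_of_ne_zero' w (Finsupp.mem_support_iff.1 him)
    rw [pderiv_eq_zero_of_notMem_vars hvars]
    exact ⟨0, isWeightedHomogeneous_zero R w 0⟩

attribute [local instance] weightedGradedAlgebra

theorem isHomogeneous_partialIdeal :
    (partialIdeal n d α f).IsHomogeneous (weightedHomogeneousSubmodule ℂ (extendedWeight α)) :=
  Ideal.homogeneous_span _ _ <| Set.forall_mem_range.2 fun i =>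
    exists_isWeightedHomogeneous_pderiv isWeightedHomogeneous_homogenization i.succ

theorem specializeX0_pderiv_homogenization (i : Fin (n + 1)) :
    specializeX0 ℂ (n + 1) (pderiv i.succ (homogenization n d α f)) =
      pderiv i (weightedHomogeneousComponent α d f) := by
  have hX (k : ℕ) : pderiv i.succ (X 0 ^ k : MvPolynomial (Fin (n + 2)) ℂ) = 0 := by
    rw [Derivation.leibniz_pow, pderiv_X_of_ne (Fin.succ_ne_zero i).symm, smul_zero, smul_zero]
  rw [homogenization, map_sum, map_sum, Finset.sum_range_succ, Finset.sum_eq_zero fun k hk => ?_]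
  · simp [pderiv_rename (Fin.succ_injective _), specializeX0_rename_succ]
  · have hk : d - k ≠ 0 := by simpa [Nat.sub_eq_zero_iff_le] using hk
    simp [Derivation.leibniz, hX, specializeX0_X_zero, hk]

theorem map_specializeX0_partialIdeal :
    (partialIdeal n d α f).map (specializeX0 ℂ (n + 1)) =
      Ideal.span (Set.range fun i => pderiv i (weightedHomogeneousComponent α d f)) := by
  rw [partialIdeal, Ideal.map_span, ← Set.range_comp]
  simp only [Function.comp_def, specializeX0_pderiv_homogenization]

theorem vmod_smul_eq (p : Polynomial ℂ) (v : Vmod n d α f) :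
    p • v = Polynomial.aeval (Ideal.Quotient.mk (partialIdeal n d α f) (X 0)) p * v :=
  rfl

theorem X_smul_mk (p : MvPolynomial (Fin (n + 2)) ℂ) :
    (Polynomial.X : Polynomial ℂ) • (Ideal.Quotient.mk (partialIdeal n d α f) p : Vmod n d α f) =
      Ideal.Quotient.mk (partialIdeal n d α f) (X 0 * p) := by
  rw [vmod_smul_eq, Polynomial.aeval_X, map_mul]

instance : IsScalarTower ℂ (Polynomial ℂ) (Vmod n d α f) where
  smul_assoc c p v := by rw [vmod_smul_eq, vmod_smul_eq, map_smul, smul_mul_assoc]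

theorem isSMulRegular_X_vmod
    (htame : ∀ x : Fin (n + 1) → ℂ,
      (∀ i, eval x (pderiv i (weightedHomogeneousComponent α d f)) = 0) → x = 0) :
    IsSMulRegular (Vmod n d α f) (Polynomial.X : Polynomial ℂ) := by
  have hreg : IsSMulRegular (Vmod n d α f) (X 0 : MvPolynomial (Fin (n + 2)) ℂ) := by
    refine isSMulRegular_X_zero_of_X_pow_mem fun i =>
      exists_X_pow_mem_of_forall_eval_eq_zero (fun x hx => htame x fun j => hx _ ?_) i
    rw [← partialIdeal, map_specializeX0_partialIdeal]
    exact Ideal.subset_span ⟨j, rfl⟩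
  intro v w hvw
  obtain ⟨p, rfl⟩ := Ideal.Quotient.mk_surjective v
  obtain ⟨q, rfl⟩ := Ideal.Quotient.mk_surjective w
  dsimp only at hvw
  rw [X_smul_mk, X_smul_mk] at hvw
  exact hreg hvw

variable {ι : Type*} {b : ι → MvPolynomial (Fin (n + 1)) ℂ}

theorem linearIndependent_vmod
    (htame : ∀ x : Fin (n + 1) → ℂ,
      (∀ i, eval x (pderiv i (weightedHomogeneousComponent α d f)) = 0) → x = 0)
    (hindep : LinearIndependent ℂ fun j => Ideal.Quotient.mk
      (Ideal.span (Set.range fun i => pderiv i (weightedHomogeneousComponent α d f))) (b j)) :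
    LinearIndependent (Polynomial ℂ) fun j =>
      Ideal.Quotient.mk (partialIdeal n d α f) (rename Fin.succ (b j)) := by
  rw [← map_specializeX0_partialIdeal] at hindep
  let π : Vmod n d α f →ₐ[ℂ]
      MvPolynomial (Fin (n + 1)) ℂ ⧸ (partialIdeal n d α f).map (specializeX0 ℂ (n + 1)) :=
    Ideal.quotientMapₐ _ (specializeX0 ℂ (n + 1)) Ideal.le_comap_map
  have hπ (p : MvPolynomial (Fin (n + 2)) ℂ) :
      π (Ideal.Quotient.mk _ p) = Ideal.Quotient.mk _ (specializeX0 ℂ (n + 1) p) := rfl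
  refine linearIndependent_polynomial_of_isSMulRegular (isSMulRegular_X_vmod htame)
    (π := π.toLinearMap) (fun v => ?_) ?_
  · obtain ⟨p, rfl⟩ := Ideal.Quotient.mk_surjective v
    rw [X_smul_mk, AlgHom.toLinearMap_apply, hπ, map_mul, specializeX0_X_zero, zero_mul, map_zero]
  · simpa only [Function.comp_def, AlgHom.toLinearMap_apply, hπ, specializeX0_rename_succ]
      using hindep

theorem span_vmod_eq_top (hb : ∀ j, ∃ e, IsWeightedHomogeneous α (b j) e)
    (hspan : Submodule.span ℂ (Set.range fun j => Ideal.Quotient.mk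
      (Ideal.span (Set.range fun i => pderiv i (weightedHomogeneousComponent α d f))) (b j)) = ⊤) :
    Submodule.span (Polynomial ℂ) (Set.range fun j =>
      Ideal.Quotient.mk (partialIdeal n d α f) (rename Fin.succ (b j))) = ⊤ := by
  rw [← map_specializeX0_partialIdeal] at hspan
  let q : MvPolynomial (Fin (n + 2)) ℂ →ₗ[ℂ] Vmod n d α f :=
    (Ideal.Quotient.mkₐ ℂ (partialIdeal n d α f)).toLinearMap
  have hker (p : MvPolynomial (Fin (n + 2)) ℂ) : p ∈ LinearMap.ker q ↔ p ∈ partialIdeal n d α f :=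
    Ideal.Quotient.eq_zero_iff_mem
  refine span_polynomial_range_eq_top (weightedHomogeneousSubmodule ℂ (extendedWeight α))
    one_pos (isWeightedHomogeneous_X ℂ _ 0) (q := q) Ideal.Quotient.mk_surjective
    (fun p => (X_smul_mk p).symm) ?_ (fun j => ?_) fun p => ?_
  · intro k p hp
    exact (hker _).2 (isHomogeneous_partialIdeal k ((hker p).1 hp))
  · obtain ⟨e, he⟩ := hb j
    exact ⟨e, isWeightedHomogeneous_rename_succ he⟩
  · obtain ⟨h, hh, r, hr, c, hp⟩ := exists_eq_add_add_X_zero_mul hspan p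
    exact ⟨h + r, Submodule.add_mem_sup hh ((hker r).2 hr), c, hp⟩

theorem homogenization_milnor_free_over_x0_general
    (htame : ∀ x : Fin (n + 1) → ℂ, (∀ i, eval x
      (pderiv i (weightedHomogeneousComponent α (weightedTotalDegree α f) f)) = 0) → x = 0)
    (hb : ∀ j, ∃ e, IsWeightedHomogeneous α (b j) e)
    (hindep : LinearIndependent ℂ fun j => Ideal.Quotient.mk (Ideal.span (Set.range fun i =>
      pderiv i (weightedHomogeneousComponent α (weightedTotalDegree α f) f))) (b j))
    (hspan : Submodule.span ℂ (Set.range fun j => Ideal.Quotient.mk (Ideal.span (Set.range fun i =>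
      pderiv i (weightedHomogeneousComponent α (weightedTotalDegree α f) f))) (b j)) = ⊤) :
    LinearIndependent (Polynomial ℂ) (fun j =>
      Ideal.Quotient.mk (partialIdeal n (weightedTotalDegree α f) α f) (rename Fin.succ (b j))) ∧
    Submodule.span (Polynomial ℂ) (Set.range fun j =>
      Ideal.Quotient.mk (partialIdeal n (weightedTotalDegree α f) α f)
        (rename Fin.succ (b j))) = ⊤ :=
  ⟨linearIndependent_vmod htame hindep, span_vmod_eq_top hb hspan⟩

end Homogenization

/-- Let `f` be strongly tame of weighted degree `d` with homogenization `F`,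
and let the monomials `x^β`, `β ∈ I`, be a ℂ-basis of the Milnor algebra `V_g` of the last
quasi-homogeneous part `g` of `f`.  Then the images of `x^β`, `β ∈ I`, form a basis of the
`ℂ[x₀]`-module `V = ℂ[x₀,x]/⟨∂F/∂x₁,…,∂F/∂x_{n+1}⟩`; in particular `V` is free of rank
`#I` over `ℂ[x₀]`. -/
theorem homogenization_milnor_free_over_x0
    (n : ℕ) (hn : 1 ≤ n) (α : Fin (n + 1) → ℕ)
    (hαpos : ∀ i, 0 < α i) (hα : Finset.univ.gcd α = 1)
    (f : MvPolynomial (Fin (n + 1)) ℂ) (d : ℕ)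
    (hd : MvPolynomial.weightedTotalDegree α f = d)
    (g : MvPolynomial (Fin (n + 1)) ℂ)
    (hg : g = weightedHomogeneousComponent α d f)
    (hg0 : g ≠ 0)
    (htame : ∀ x : Fin (n + 1) → ℂ, (∀ i, eval x (pderiv i g) = 0) → x = 0)
    (I : Finset (Fin (n + 1) →₀ ℕ))
    (hIindep : LinearIndependent ℂ (fun β : I =>
      Ideal.Quotient.mk (Ideal.span (Set.range fun i => pderiv i g))
        (monomial (β : Fin (n + 1) →₀ ℕ) (1 : ℂ))))
    (hIspan : Submodule.span ℂ (Set.range fun β : I =>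
      Ideal.Quotient.mk (Ideal.span (Set.range fun i => pderiv i g))
        (monomial (β : Fin (n + 1) →₀ ℕ) (1 : ℂ))) = ⊤) :
    LinearIndependent (Polynomial ℂ) (fun β : I =>
      Ideal.Quotient.mk (partialIdeal n d α f)
        (rename Fin.succ (monomial (β : Fin (n + 1) →₀ ℕ) (1 : ℂ)))) ∧
    Submodule.span (Polynomial ℂ) (Set.range fun β : I =>
      Ideal.Quotient.mk (partialIdeal n d α f)
        (rename Fin.succ (monomial (β : Fin (n + 1) →₀ ℕ) (1 : ℂ)))) = ⊤ := by
  subst hd hg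
  exact homogenization_milnor_free_over_x0_general htame
    (fun β => ⟨_, isWeightedHomogeneous_monomial α _ 1 rfl⟩) hIindep hIspan
end
end
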